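/- arXiv:0912.3568 — 6 statements merged into one kernel-verified Lean document; each statement's English description precedes it below -/
import Mathlib

section
/- Let q : ℝ → ℝ be locally integrable and let (u, v) be a solution of −u″ + q·u = 0. Then for all x, y ∈ ℝ: (u(y)² + v(y)²)·exp(−∫_{min(x,y)}^{max(x,y)} |1 + q(t)| dt) ≤ u(x)² + v(x)² ≤ (u(y)² + v(y)²)·exp(∫_{min(x,y)}^{max(x,y)} |1 + q(t)| dt). -/
open MeasureTheory

/-!
The energy `‖u‖² + ‖v‖²` is absolutely continuous, and almost everywhere its derivative is
`2⟪u, v⟫ + 2⟪v, Q u⟫ = 2⟪v, (1 + Q) u⟫`, which by Cauchy–Schwarz and AM-GM is at most `‖1 + Q‖`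
times the energy in absolute value. Grönwall's inequality for absolutely continuous functions,
applied in both directions of time, gives the two bounds; it holds because `f e^{-∫ g}` is antitone
when `f' ≤ g f` almost everywhere. In the scalar equation, `Q` is multiplication by `q`.
-/

open Set Filter
open scoped RealInnerProductSpace

section AbsolutelyContinuous

theorem absolutelyContinuousOnInterval_of_dist_le {X Y : Type*} [PseudoMetricSpace X]
    [PseudoMetricSpace Y] {f : ℝ → X} {g : ℝ → Y} {a b C : ℝ}
    (hg : AbsolutelyContinuousOnInterval g a b)
    (hfg : ∀ x ∈ uIcc a b, ∀ y ∈ uIcc a b, dist (f x) (f y) ≤ C * dist (g x) (g y)) :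
    AbsolutelyContinuousOnInterval f a b := by
  unfold AbsolutelyContinuousOnInterval at hg ⊢
  refine squeeze_zero' (Eventually.of_forall fun _ ↦ Finset.sum_nonneg fun _ _ ↦ dist_nonneg) ?_
    (by simpa using hg.const_mul C)
  rw [eventually_inf_principal]
  filter_upwards with I hI
  rw [Finset.mul_sum]
  exact Finset.sum_le_sum fun i hi ↦ hfg _ (hI.1 i hi).1 _ (hI.1 i hi).2

theorem absolutelyContinuousOnInterval_comp_of_locallyLipschitz {E Y : Type*}
    [SeminormedAddCommGroup E] [PseudoMetricSpace Y] {φ : E → Y} {f : ℝ → E} {a b : ℝ}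
    (hφ : LocallyLipschitz φ) (hf : AbsolutelyContinuousOnInterval f a b) :
    AbsolutelyContinuousOnInterval (fun x ↦ φ (f x)) a b := by
  obtain ⟨K, hK⟩ := hφ.locallyLipschitzOn.exists_lipschitzOnWith_of_compact
    (isCompact_uIcc.image_of_continuousOn hf.continuousOn)
  exact absolutelyContinuousOnInterval_of_dist_le hf fun x hx y hy ↦
    hK.dist_le_mul _ (mem_image_of_mem f hx) _ (mem_image_of_mem f hy)

theorem absolutelyContinuousOnInterval_norm_sq {E : Type*} [SeminormedAddCommGroup E] {f : ℝ → E}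
    {a b : ℝ} (hf : AbsolutelyContinuousOnInterval f a b) :
    AbsolutelyContinuousOnInterval (fun x ↦ ‖f x‖ ^ 2) a b := by
  have hnorm : AbsolutelyContinuousOnInterval (fun x ↦ ‖f x‖) a b :=
    absolutelyContinuousOnInterval_comp_of_locallyLipschitz
      lipschitzWith_one_norm.locallyLipschitz hf
  simpa only [sq] using hnorm.fun_mul hnorm

theorem absolutelyContinuousOnInterval_integral {E : Type*} [NormedAddCommGroup E]
    [NormedSpace ℝ E] {f : ℝ → E} {a b c : ℝ} (hf : IntervalIntegrable f volume a b)
    (hc : c ∈ uIcc a b) :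
    AbsolutelyContinuousOnInterval (fun x ↦ ∫ t in c..x, f t) a b := by
  refine absolutelyContinuousOnInterval_of_dist_le (C := 1)
    (hf.norm.absolutelyContinuousOnInterval_intervalIntegral hc) fun x hx y hy ↦ ?_
  have hint : ∀ z ∈ uIcc a b, IntervalIntegrable f volume c z := fun z hz ↦
    hf.mono_set (uIcc_subset_uIcc hc hz)
  rw [dist_eq_norm, dist_eq_norm, one_mul,
    intervalIntegral.integral_interval_sub_left (hint x hx) (hint y hy),
    intervalIntegral.integral_interval_sub_left (hint x hx).norm (hint y hy).norm]
  exact intervalIntegral.norm_integral_le_abs_integral_norm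

theorem antitoneOn_of_absolutelyContinuousOnInterval_of_ae_deriv_nonpos {f : ℝ → ℝ} {a b : ℝ}
    (hf : AbsolutelyContinuousOnInterval f a b) (hf' : ∀ᵐ x, x ∈ uIcc a b → deriv f x ≤ 0) :
    AntitoneOn f (uIcc a b) := by
  intro x hx y hy hxy
  have hsub : uIcc x y ⊆ uIcc a b := uIcc_subset_uIcc hx hy
  have hnonneg : 0 ≤ ∫ t in x..y, -deriv f t := by
    refine intervalIntegral.integral_nonneg_of_ae_restrict hxy ?_
    rw [← uIcc_of_le hxy]
    refine (ae_restrict_iff' measurableSet_uIcc).2 ?_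
    filter_upwards [hf'] with t ht hmem using neg_nonneg.2 (ht (hsub hmem))
  rw [intervalIntegral.integral_neg, (hf.mono hsub).integral_deriv_eq_sub] at hnonneg
  linarith

end AbsolutelyContinuous

section Gronwall

variable {f g : ℝ → ℝ}

theorem le_mul_exp_integral_of_ae_deriv_le {a b : ℝ} (hab : a ≤ b)
    (hf : AbsolutelyContinuousOnInterval f a b) (hg : IntervalIntegrable g volume a b)
    (hfg : ∀ᵐ x, x ∈ uIcc a b → deriv f x ≤ g x * f x) :
    f b ≤ f a * Real.exp (∫ t in a..b, g t) := by
  have hG := absolutelyContinuousOnInterval_integral hg left_mem_uIcc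
  have hexp := absolutelyContinuousOnInterval_comp_of_locallyLipschitz
    Real.contDiff_exp.locallyLipschitz hG.fun_neg
  have hanti : f b * Real.exp (-∫ t in a..b, g t) ≤ f a * Real.exp (-∫ t in a..a, g t) := by
    refine antitoneOn_of_absolutelyContinuousOnInterval_of_ae_deriv_nonpos (hf.fun_mul hexp) ?_
      left_mem_uIcc right_mem_uIcc hab
    filter_upwards [hfg, hf.ae_differentiableAt, hg.ae_hasDerivAt_integral]
      with x hle hdf hdG hx
    have hderiv : deriv (fun x ↦ f x * Real.exp (-∫ t in a..x, g t)) x =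
        (deriv f x - g x * f x) * Real.exp (-∫ t in a..x, g t) := by
      rw [((hdf hx).hasDerivAt.fun_mul (hdG hx a left_mem_uIcc).fun_neg.exp).deriv]
      ring
    rw [hderiv]
    exact mul_nonpos_of_nonpos_of_nonneg (sub_nonpos.2 (hle hx)) (Real.exp_pos _).le
  rwa [intervalIntegral.integral_same, neg_zero, Real.exp_zero, mul_one, Real.exp_neg,
    ← div_eq_mul_inv, div_le_iff₀ (Real.exp_pos _)] at hanti

theorem le_mul_exp_integral_of_ae_neg_mul_le_deriv {a b : ℝ} (hab : a ≤ b)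
    (hf : AbsolutelyContinuousOnInterval f a b) (hg : IntervalIntegrable g volume a b)
    (hfg : ∀ᵐ x, x ∈ uIcc a b → -(g x * f x) ≤ deriv f x) :
    f a ≤ f b * Real.exp (∫ t in a..b, g t) := by
  have hneg : -f b ≤ -f a * Real.exp (∫ t in a..b, -g t) := by
    refine le_mul_exp_integral_of_ae_deriv_le hab hf.fun_neg hg.neg ?_
    filter_upwards [hfg] with x hx hmem
    rw [deriv.fun_neg, neg_mul_neg]
    linarith [hx hmem]
  rw [intervalIntegral.integral_neg, Real.exp_neg, neg_mul, neg_le_neg_iff, ← div_eq_mul_inv,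
    div_le_iff₀ (Real.exp_pos _)] at hneg
  exact hneg

theorem le_mul_exp_integral_of_ae_abs_deriv_le {x y : ℝ}
    (hf : AbsolutelyContinuousOnInterval f x y) (hg : IntervalIntegrable g volume x y)
    (hfg : ∀ᵐ t, t ∈ uIcc x y → |deriv f t| ≤ g t * f t) :
    f x ≤ f y * Real.exp (∫ t in min x y..max x y, g t) := by
  rcases le_total x y with hxy | hyx
  · rw [min_eq_left hxy, max_eq_right hxy]
    refine le_mul_exp_integral_of_ae_neg_mul_le_deriv hxy hf hg ?_
    filter_upwards [hfg] with t ht hmem using (abs_le.1 (ht hmem)).1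
  · rw [min_eq_right hyx, max_eq_left hyx]
    refine le_mul_exp_integral_of_ae_deriv_le hyx hf.symm hg.symm ?_
    rw [uIcc_comm]
    filter_upwards [hfg] with t ht hmem using (abs_le.1 (ht hmem)).2

end Gronwall

theorem intervalIntegrable_apply_of_continuousOn {𝕜 E F : Type*} [NontriviallyNormedField 𝕜]
    [NormedAddCommGroup E] [NormedSpace 𝕜 E] [NormedAddCommGroup F] [NormedSpace 𝕜 F]
    {μ : Measure ℝ} {L : ℝ → E →L[𝕜] F} {f : ℝ → E} {a b : ℝ}
    (hL : IntervalIntegrable L μ a b) (hf : ContinuousOn f (uIcc a b)) :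
    IntervalIntegrable (fun t ↦ L t (f t)) μ a b := by
  obtain ⟨C, hC⟩ := isCompact_uIcc.exists_bound_of_continuousOn hf
  rw [intervalIntegrable_iff] at hL ⊢
  refine (ContinuousLinearMap.id 𝕜 (E →L[𝕜] F)).integrable_of_bilin_of_bdd_right C hL
    ((hf.mono uIoc_subset_uIcc).aestronglyMeasurable measurableSet_uIoc) ?_
  exact (ae_restrict_iff' measurableSet_uIoc).2 <| .of_forall fun t ht ↦
    hC t (uIoc_subset_uIcc ht)

section Energy

variable {H : Type*} [NormedAddCommGroup H] [InnerProductSpace ℝ H]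

theorem abs_two_mul_inner_apply_le (A : H →L[ℝ] H) (x y : H) :
    |2 * ⟪y, A x⟫| ≤ ‖A‖ * (‖x‖ ^ 2 + ‖y‖ ^ 2) := by
  have hinner : |⟪y, A x⟫| ≤ ‖y‖ * (‖A‖ * ‖x‖) :=
    (abs_real_inner_le_norm y (A x)).trans
      (mul_le_mul_of_nonneg_left (A.le_opNorm x) (norm_nonneg y))
  calc |2 * ⟪y, A x⟫| = 2 * |⟪y, A x⟫| := by rw [abs_mul, abs_two]
    _ ≤ 2 * (‖y‖ * (‖A‖ * ‖x‖)) := mul_le_mul_of_nonneg_left hinner zero_le_two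
    _ = ‖A‖ * (2 * ‖x‖ * ‖y‖) := by ring
    _ ≤ ‖A‖ * (‖x‖ ^ 2 + ‖y‖ ^ 2) :=
      mul_le_mul_of_nonneg_left (two_mul_le_add_sq _ _) (norm_nonneg A)

theorem hasDerivAt_norm_sq_add_norm_sq {u v : ℝ → H} {A : H →L[ℝ] H} {x : ℝ}
    (hu : HasDerivAt u (v x) x) (hv : HasDerivAt v (A (u x)) x) :
    HasDerivAt (fun t ↦ ‖u t‖ ^ 2 + ‖v t‖ ^ 2) (2 * ⟪v x, (1 + A) (u x)⟫) x := by
  refine (hu.norm_sq.fun_add hv.norm_sq).congr_deriv ?_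
  rw [add_apply, one_apply_eq_self, inner_add_right, real_inner_comm (u x), mul_add]

/-- `(u, v)` is a solution of `-u'' + Q u = 0` with `v = u'`, for an operator-valued potential `Q`.
The second equation is in integrated form, since `v` need only be differentiable almost
everywhere when `Q` is merely locally integrable. -/
structure IsSchrodingerSolution (Q : ℝ → H →L[ℝ] H) (u v : ℝ → H) : Prop where
  hasDerivAt : ∀ x, HasDerivAt u (v x) x
  eq_add_integral : ∀ x y, v x = v y + ∫ t in y..x, Q t (u t)

namespace IsSchrodingerSolution

variable {Q : ℝ → H →L[ℝ] H} {u v : ℝ → H}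

theorem intervalIntegrable_apply (h : IsSchrodingerSolution Q u v) {a b : ℝ}
    (hQ : IntervalIntegrable Q volume a b) :
    IntervalIntegrable (fun t ↦ Q t (u t)) volume a b :=
  intervalIntegrable_apply_of_continuousOn hQ fun x _ ↦
    (h.hasDerivAt x).continuousAt.continuousWithinAt

theorem eq_primitive (h : IsSchrodingerSolution Q u v) (a : ℝ) :
    v = fun x ↦ v a + ∫ t in a..x, Q t (u t) :=
  funext fun x ↦ h.eq_add_integral x a

theorem absolutelyContinuousOnInterval_deriv (h : IsSchrodingerSolution Q u v) {a b : ℝ}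
    (hQ : IntervalIntegrable Q volume a b) : AbsolutelyContinuousOnInterval v a b := by
  rw [h.eq_primitive a]
  exact contDiff_const.contDiffOn.absolutelyContinuousOnInterval.fun_add
    (absolutelyContinuousOnInterval_integral (h.intervalIntegrable_apply hQ) left_mem_uIcc)

theorem ae_hasDerivAt_deriv [CompleteSpace H] (h : IsSchrodingerSolution Q u v) {a b : ℝ}
    (hQ : IntervalIntegrable Q volume a b) :
    ∀ᵐ x, x ∈ uIcc a b → HasDerivAt v (Q x (u x)) x := by
  filter_upwards [(h.intervalIntegrable_apply hQ).ae_hasDerivAt_integral] with x hx hmem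
  rw [h.eq_primitive a]
  exact (hx hmem a left_mem_uIcc).const_add (v a)

theorem absolutelyContinuousOnInterval (h : IsSchrodingerSolution Q u v) {a b : ℝ}
    (hQ : IntervalIntegrable Q volume a b) : AbsolutelyContinuousOnInterval u a b := by
  obtain ⟨C, hC⟩ := (h.absolutelyContinuousOnInterval_deriv hQ).exists_bound
  refine absolutelyContinuousOnInterval_of_dist_le (g := fun t ↦ t) (C := C)
    LipschitzWith.id.lipschitzOnWith.absolutelyContinuousOnInterval fun x hx y hy ↦ ?_
  simpa only [dist_eq_norm] using (convex_uIcc a b).norm_image_sub_le_of_norm_hasDerivWithin_le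
    (fun t _ ↦ (h.hasDerivAt t).hasDerivWithinAt) hC hy hx

theorem norm_sq_add_norm_sq_le [CompleteSpace H] (h : IsSchrodingerSolution Q u v) {x y : ℝ}
    (hQ : IntervalIntegrable Q volume x y) :
    ‖u x‖ ^ 2 + ‖v x‖ ^ 2 ≤
      (‖u y‖ ^ 2 + ‖v y‖ ^ 2) * Real.exp (∫ t in min x y..max x y, ‖1 + Q t‖) := by
  refine le_mul_exp_integral_of_ae_abs_deriv_le
    (f := fun t ↦ ‖u t‖ ^ 2 + ‖v t‖ ^ 2) (g := fun t ↦ ‖1 + Q t‖)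
    ((absolutelyContinuousOnInterval_norm_sq (h.absolutelyContinuousOnInterval hQ)).fun_add
      (absolutelyContinuousOnInterval_norm_sq (h.absolutelyContinuousOnInterval_deriv hQ)))
    (intervalIntegrable_const.add hQ).norm ?_
  filter_upwards [h.ae_hasDerivAt_deriv hQ] with t ht hmem
  rw [(hasDerivAt_norm_sq_add_norm_sq (h.hasDerivAt t) (ht hmem)).deriv]
  exact abs_two_mul_inner_apply_le (1 + Q t) (u t) (v t)

end IsSchrodingerSolution

end Energy

section Scalar

variable {𝕜 : Type*} (A : Type*) [NormedField 𝕜] [NormedRing A] [NormOneClass A]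
  [NormedAlgebra 𝕜 A]

theorem norm_one_add_algebraMap (r : 𝕜) : ‖1 + algebraMap 𝕜 A r‖ = ‖1 + r‖ := by
  rw [← map_one (algebraMap 𝕜 A), ← map_add, norm_algebraMap']

theorem locallyIntegrable_algebraMap_comp {X : Type*} [TopologicalSpace X] [MeasurableSpace X]
    {μ : Measure X} {f : X → 𝕜} (hf : LocallyIntegrable f μ) :
    LocallyIntegrable (fun x ↦ algebraMap 𝕜 A (f x)) μ := fun x ↦ by
  obtain ⟨U, hU, hfU⟩ := hf x
  exact ⟨U, hU, Integrable.mono hfU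
    ((algebraMapCLM 𝕜 A).continuous.comp_aestronglyMeasurable hfU.aestronglyMeasurable)
    (.of_forall fun y ↦ (norm_algebraMap' A (f y)).le)⟩

end Scalar

theorem solution_apriori_bound_general {H : Type*} [NormedAddCommGroup H] [InnerProductSpace ℝ H]
    [CompleteSpace H] {Q : ℝ → H →L[ℝ] H} {u v : ℝ → H} (hQ : LocallyIntegrable Q volume)
    (h : IsSchrodingerSolution Q u v) (x y : ℝ) :
    (‖u y‖ ^ 2 + ‖v y‖ ^ 2) * Real.exp (-∫ t in min x y..max x y, ‖1 + Q t‖)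
        ≤ ‖u x‖ ^ 2 + ‖v x‖ ^ 2 ∧
      ‖u x‖ ^ 2 + ‖v x‖ ^ 2
        ≤ (‖u y‖ ^ 2 + ‖v y‖ ^ 2) * Real.exp (∫ t in min x y..max x y, ‖1 + Q t‖) := by
  have hQxy : IntervalIntegrable Q volume x y :=
    (hQ.integrableOn_isCompact isCompact_uIcc).intervalIntegrable
  refine ⟨?_, h.norm_sq_add_norm_sq_le hQxy⟩
  rw [Real.exp_neg, ← div_eq_mul_inv, div_le_iff₀ (Real.exp_pos _), min_comm, max_comm]
  exact h.norm_sq_add_norm_sq_le hQxy.symm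

/-- A priori bound on solutions of `-u'' + q u = 0`:
`(u(y)² + v(y)²) exp(-∫ |1+q|) ≤ u(x)² + v(x)² ≤ (u(y)² + v(y)²) exp(∫ |1+q|)`. -/
theorem solution_apriori_bound (q u v : ℝ → ℝ)
    (hq : LocallyIntegrable q volume)
    (hu : ∀ x : ℝ, HasDerivAt u (v x) x)
    (hv : ∀ x y : ℝ, v x = v y + ∫ t in y..x, q t * u t) :
    ∀ x y : ℝ,
      (u y ^ 2 + v y ^ 2) * Real.exp (-∫ t in min x y..max x y, |1 + q t|)
          ≤ u x ^ 2 + v x ^ 2 ∧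
      u x ^ 2 + v x ^ 2
          ≤ (u y ^ 2 + v y ^ 2) * Real.exp (∫ t in min x y..max x y, |1 + q t|) := by
  simpa only [norm_one_add_algebraMap, Real.norm_eq_abs, sq_abs] using
    solution_apriori_bound_general (locallyIntegrable_algebraMap_comp (ℝ →L[ℝ] ℝ) hq) ⟨hu, hv⟩
end

section
/- For i = 1, 2 let qᵢ : ℝ → ℝ be locally integrable and let (uᵢ, vᵢ) be a solution of −u″ + qᵢ·u = 0. Then for all x, y ∈ ℝ: ((u₁(x) − u₂(x))² + (v₁(x) − v₂(x))²)^{1/2} ≤ ((u₁(y) − u₂(y))² + (v₁(y) − v₂(y))²)^{1/2}·exp(∫_{min(x,y)}^{max(x,y)} (|q₂(t)| + 1) dt) + (u₁(y)² + v₁(y)²)^{1/2}·exp(∫_{min(x,y)}^{max(x,y)} (|q₁(t)| + |q₂(t)| + 2) dt)·∫_{min(x,y)}^{max(x,y)} |q₁(t) − q₂(t)| dt. -/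
open MeasureTheory

/-!
In the phase space with norm `√(‖u‖² + ‖v‖²)`, the pair `(u, u')` of a solution has derivative
`(u', q u)`, whose norm is at most `‖q‖ + 1` times that of `(u, u')`; Grönwall's inequality then
bounds the solution. The difference `w = u₁ - u₂` solves `w'' = q₂ w + (q₁ - q₂) u₁`, so the same
estimate, with the last term as a source and the bound just obtained for `u₁`, compares the two.
-/

open Set

section Gronwall

lemma absolutelyContinuousOnInterval_locallyLipschitz_comp {X Y : Type*} [SeminormedAddCommGroup X]
    [PseudoMetricSpace Y] {φ : X → Y} {f : ℝ → X} {a b : ℝ} (hφ : LocallyLipschitz φ)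
    (hf : AbsolutelyContinuousOnInterval f a b) :
    AbsolutelyContinuousOnInterval (fun t ↦ φ (f t)) a b := by
  obtain ⟨K, hK⟩ : ∃ K, LipschitzOnWith K φ (f '' uIcc a b) :=
    LocallyLipschitzOn.exists_lipschitzOnWith_of_compact
      (isCompact_uIcc.image_of_continuousOn hf.continuousOn) hφ.locallyLipschitzOn
  rw [AbsolutelyContinuousOnInterval] at hf ⊢
  refine squeeze_zero' (.of_forall fun I ↦ Finset.sum_nonneg fun _ _ ↦ dist_nonneg) ?_
    (by simpa only [mul_zero] using hf.const_mul (K : ℝ))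
  filter_upwards [Filter.mem_inf_of_right (Filter.mem_principal_self _)] with I hI
  rw [Finset.mul_sum]
  exact Finset.sum_le_sum fun i hi ↦ hK.dist_le_mul _ (mem_image_of_mem f (hI.1 i hi).1) _
    (mem_image_of_mem f (hI.1 i hi).2)

variable {f k : ℝ → ℝ} {a b A : ℝ}

lemma le_of_absolutelyContinuousOnInterval_of_deriv_nonpos (hab : a ≤ b)
    (hf : AbsolutelyContinuousOnInterval f a b)
    (hf' : ∀ᵐ t, t ∈ Icc a b → deriv f t ≤ 0) : f b ≤ f a := by
  have h : 0 ≤ ∫ t in a..b, -deriv f t :=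
    intervalIntegral.integral_nonneg_of_ae_restrict hab <|
      (ae_restrict_iff' measurableSet_Icc).2 <|
        hf'.mono fun t ht hmem ↦ neg_nonneg.2 (ht hmem)
  rwa [intervalIntegral.integral_neg, hf.integral_deriv_eq_sub, neg_sub, sub_nonneg] at h

/- The integrating factor `exp (-∫ k)` turns the hypothesis into monotonicity of
`(A + ∫ k f) * exp (-∫ k)`. -/
theorem le_mul_exp_integral_of_le_add_integral (hab : a ≤ b)
    (hk : IntervalIntegrable k volume a b) (hk₀ : ∀ t ∈ Icc a b, 0 ≤ k t)
    (hkf : IntervalIntegrable (fun t ↦ k t * f t) volume a b)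
    (h : ∀ t ∈ Icc a b, f t ≤ A + ∫ s in a..t, k s * f s) :
    f b ≤ A * Real.exp (∫ s in a..b, k s) := by
  set G : ℝ → ℝ := fun t ↦ A + ∫ s in a..t, k s * f s with hG
  set I : ℝ → ℝ := fun t ↦ Real.exp (-∫ s in a..t, k s) with hI
  have hGac : AbsolutelyContinuousOnInterval G a b :=
    (LipschitzWith.const A).lipschitzOnWith.absolutelyContinuousOnInterval.add
      (hkf.absolutelyContinuousOnInterval_intervalIntegral left_mem_uIcc)
  have hIac : AbsolutelyContinuousOnInterval I a b :=
    absolutelyContinuousOnInterval_locallyLipschitz_comp (φ := Real.exp)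
      convexOn_exp.locallyLipschitz
      (hk.absolutelyContinuousOnInterval_intervalIntegral left_mem_uIcc).neg
  have hderiv : ∀ᵐ t, t ∈ Icc a b → deriv (G * I) t ≤ 0 := by
    filter_upwards [hkf.ae_hasDerivAt_integral, hk.ae_hasDerivAt_integral] with t hkft hkt ht
    have ht' : t ∈ uIcc a b := Icc_subset_uIcc ht
    have hGt : HasDerivAt G (k t * f t) t := (hkft ht' a left_mem_uIcc).const_add A
    have hIt : HasDerivAt I (I t * -k t) t := (hkt ht' a left_mem_uIcc).neg.exp
    calc deriv (G * I) t = k t * (f t - G t) * I t := by rw [(hGt.mul hIt).deriv]; ring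
      _ ≤ 0 := mul_nonpos_of_nonpos_of_nonneg
        (mul_nonpos_of_nonneg_of_nonpos (hk₀ t ht) (sub_nonpos.2 (h t ht))) (Real.exp_nonneg _)
  have hGI : G b * I b ≤ A := by
    simpa [hG, hI] using
      le_of_absolutelyContinuousOnInterval_of_deriv_nonpos hab (hGac.mul hIac) hderiv
  calc f b ≤ G b := h b (right_mem_Icc.2 hab)
    _ = G b * I b * Real.exp (∫ s in a..b, k s) := by
      rw [mul_assoc, hI, ← Real.exp_add, neg_add_cancel, Real.exp_zero, mul_one]
    _ ≤ A * Real.exp (∫ s in a..b, k s) := by gcongr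

theorem le_mul_exp_integral_uIoc_of_le_add_integral {x y : ℝ}
    (hk : IntervalIntegrable k volume y x) (hk₀ : ∀ t ∈ uIcc y x, 0 ≤ k t)
    (hkf : IntervalIntegrable (fun t ↦ k t * f t) volume y x)
    (h : ∀ t ∈ uIcc y x, f t ≤ A + ∫ s in uIoc y t, k s * f s) :
    f x ≤ A * Real.exp (∫ s in uIoc y x, k s) := by
  rcases le_total y x with hyx | hxy
  · rw [uIcc_of_le hyx] at hk₀ h
    rw [uIoc_of_le hyx, ← intervalIntegral.integral_of_le hyx]
    refine le_mul_exp_integral_of_le_add_integral hyx hk hk₀ hkf fun t ht ↦ ?_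
    simpa only [uIoc_of_le ht.1, intervalIntegral.integral_of_le ht.1] using h t ht
  · rw [uIcc_of_ge hxy] at hk₀ h
    have hneg : ∀ t ∈ Icc (-y) (-x), -t ∈ Icc x y := fun t ht ↦ ⟨le_neg.1 ht.2, neg_le.1 ht.1⟩
    have key := le_mul_exp_integral_of_le_add_integral (f := fun t ↦ f (-t)) (k := fun t ↦ k (-t))
      (A := A) (neg_le_neg hxy) ((IntervalIntegrable.iff_comp_neg).1 hk)
      (fun t ht ↦ hk₀ _ (hneg t ht)) ((IntervalIntegrable.iff_comp_neg).1 hkf) fun t ht ↦ by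
        rw [intervalIntegral.integral_comp_neg (fun s ↦ k s * f s), neg_neg,
          intervalIntegral.integral_of_le (hneg t ht).2, ← uIoc_of_ge (hneg t ht).2]
        exact h _ (hneg t ht)
    simpa only [intervalIntegral.integral_comp_neg, neg_neg, intervalIntegral.integral_of_le hxy,
      ← uIoc_of_ge hxy] using key

end Gronwall

section NormedSpace

variable {E : Type*} [NormedAddCommGroup E] [NormedSpace ℝ E]

theorem norm_le_mul_exp_integral_of_eq_add_integral {w F : ℝ → E} {k g : ℝ → ℝ} {x y : ℝ}
    (hk : IntervalIntegrable k volume y x) (hk₀ : ∀ t ∈ uIcc y x, 0 ≤ k t)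
    (hg : IntervalIntegrable g volume y x) (hg₀ : ∀ t ∈ uIcc y x, 0 ≤ g t)
    (hw : ContinuousOn w (uIcc y x)) (hwF : ∀ t ∈ uIcc y x, w t = w y + ∫ s in y..t, F s)
    (hF : ∀ t ∈ uIcc y x, ‖F t‖ ≤ k t * ‖w t‖ + g t) :
    ‖w x‖ ≤ (‖w y‖ + ∫ t in uIoc y x, g t) * Real.exp (∫ t in uIoc y x, k t) := by
  have hkw : IntervalIntegrable (fun t ↦ k t * ‖w t‖) volume y x := hk.mul_continuousOn hw.norm
  refine le_mul_exp_integral_uIoc_of_le_add_integral (f := fun t ↦ ‖w t‖) hk hk₀ hkw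
    fun t ht ↦ ?_
  have hsub : uIoc y t ⊆ uIoc y x := uIoc_subset_uIoc_of_uIcc_subset_uIcc <|
    uIcc_subset_uIcc_left ht
  have hkw' := hkw.def'.mono_set hsub
  have hg' := hg.def'.mono_set hsub
  have hint : ‖∫ s in y..t, F s‖ ≤ (∫ s in uIoc y t, g s) + ∫ s in uIoc y t, k s * ‖w s‖ := by
    rw [intervalIntegral.norm_integral_eq_norm_integral_uIoc, ← integral_add hg' hkw']
    refine norm_integral_le_of_norm_le (hg'.add hkw') ?_
    filter_upwards [ae_restrict_mem measurableSet_uIoc] with s hs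
    rw [add_comm]
    exact hF s (uIoc_subset_uIcc (hsub hs))
  have hgt : ∫ s in uIoc y t, g s ≤ ∫ s in uIoc y x, g s :=
    setIntegral_mono_set hg.def' (by
      filter_upwards [ae_restrict_mem measurableSet_uIoc] with s hs
      exact hg₀ s (uIoc_subset_uIcc hs)) hsub.eventuallyLE
  calc ‖w t‖ ≤ ‖w y‖ + ‖∫ s in y..t, F s‖ := by rw [hwF t ht]; exact norm_add_le _ _
    _ ≤ ‖w y‖ + (∫ s in uIoc y x, g s) + ∫ s in uIoc y t, k s * ‖w s‖ := by linarith

end NormedSpace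

section PhaseSpace

open scoped ENNReal

variable {E F : Type*} [NormedAddCommGroup E] [NormedAddCommGroup F] (p : ℝ≥0∞) [Fact (1 ≤ p)]

lemma norm_toLp_prod_le (a : E) (b : F) : ‖WithLp.toLp p (a, b)‖ ≤ ‖a‖ + ‖b‖ := by
  have h : WithLp.toLp p (a, b) = WithLp.toLp p (a, 0) + WithLp.toLp p (0, b) := by
    rw [← WithLp.toLp_add, Prod.mk_add_mk, add_zero, zero_add]
  simpa only [h, WithLp.norm_toLp_fst, WithLp.norm_toLp_snd] using
    norm_add_le (WithLp.toLp p (a, (0 : F))) (WithLp.toLp p ((0 : E), b))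

variable [NormedSpace ℝ E] [NormedSpace ℝ F]

lemma intervalIntegral_toLp_prod [CompleteSpace E] [CompleteSpace F] {μ : Measure ℝ} {f : ℝ → E}
    {g : ℝ → F} {a b : ℝ} (hf : IntervalIntegrable f μ a b) (hg : IntervalIntegrable g μ a b) :
    ∫ t in a..b, WithLp.toLp p (f t, g t) ∂μ
      = WithLp.toLp p (∫ t in a..b, f t ∂μ, ∫ t in a..b, g t ∂μ) := by
  have hfg : IntervalIntegrable (fun t ↦ (f t, g t)) μ a b :=
    ⟨hf.1.prodMk hg.1, hf.2.prodMk hg.2⟩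
  calc ∫ t in a..b, WithLp.toLp p (f t, g t) ∂μ
      = WithLp.toLp p (∫ t in a..b, (f t, g t) ∂μ) :=
        (WithLp.prodContinuousLinearEquiv p ℝ E F).symm.toContinuousLinearMap
          |>.intervalIntegral_comp_comm hfg
    _ = WithLp.toLp p (∫ t in a..b, f t ∂μ, ∫ t in a..b, g t ∂μ) := by
      simp only [intervalIntegral, integral_pair hf.1 hg.1, integral_pair hf.2 hg.2,
        Prod.mk_sub_mk]

theorem sqrt_sq_add_sq_le_mul_exp_integral [CompleteSpace E] {u v Q : ℝ → E} {k g : ℝ → ℝ} {x y : ℝ}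
    (hk : IntervalIntegrable k volume y x) (hk₀ : ∀ t ∈ uIcc y x, 0 ≤ k t)
    (hg : IntervalIntegrable g volume y x) (hg₀ : ∀ t ∈ uIcc y x, 0 ≤ g t)
    (hQ : IntervalIntegrable Q volume y x)
    (hu : ∀ t ∈ uIcc y x, HasDerivAt u (v t) t)
    (hv : ∀ t ∈ uIcc y x, v t = v y + ∫ s in y..t, Q s)
    (hQu : ∀ t ∈ uIcc y x, ‖Q t‖ ≤ k t * ‖u t‖ + g t) :
    √(‖u x‖ ^ 2 + ‖v x‖ ^ 2) ≤ (√(‖u y‖ ^ 2 + ‖v y‖ ^ 2) + ∫ t in uIoc y x, g t)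
      * Real.exp (∫ t in uIoc y x, (k t + 1)) := by
  set w : ℝ → WithLp 2 (E × E) := fun t ↦ WithLp.toLp 2 (u t, v t)
  have hw_norm (t : ℝ) : √(‖u t‖ ^ 2 + ‖v t‖ ^ 2) = ‖w t‖ :=
    (WithLp.prod_norm_eq_of_L2 (w t)).symm
  have huc : ContinuousOn u (uIcc y x) := fun t ht ↦ (hu t ht).continuousAt.continuousWithinAt
  have hvc : ContinuousOn v (uIcc y x) := ContinuousOn.congr
    (continuousOn_const.add
      (intervalIntegral.continuousOn_primitive_interval' hQ left_mem_uIcc)) hv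
  have hwc : ContinuousOn w (uIcc y x) :=
    (WithLp.prod_continuous_toLp 2 E E).comp_continuousOn (huc.prodMk hvc)
  have hw_eq : ∀ t ∈ uIcc y x, w t = w y + ∫ s in y..t, WithLp.toLp 2 (v s, Q s) := by
    intro t ht
    have hsub : uIcc y t ⊆ uIcc y x := uIcc_subset_uIcc_left ht
    have hvi : IntervalIntegrable v volume y t := (hvc.mono hsub).intervalIntegrable
    rw [intervalIntegral_toLp_prod 2 hvi (hQ.mono_set hsub),
      intervalIntegral.integral_eq_sub_of_hasDerivAt (fun s hs ↦ hu s (hsub hs)) hvi,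
      ← WithLp.toLp_add, Prod.mk_add_mk, add_sub_cancel, ← hv t ht]
  have hbound : ∀ t ∈ uIcc y x, ‖WithLp.toLp 2 (v t, Q t)‖ ≤ (k t + 1) * ‖w t‖ + g t := by
    intro t ht
    calc ‖WithLp.toLp 2 (v t, Q t)‖ ≤ ‖v t‖ + ‖Q t‖ := norm_toLp_prod_le 2 _ _
      _ ≤ ‖v t‖ + (k t * ‖u t‖ + g t) := by gcongr; exact hQu t ht
      _ ≤ ‖w t‖ + (k t * ‖w t‖ + g t) := by
        gcongr
        · exact WithLp.norm_snd_le E (w t)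
        · exact hk₀ t ht
        · exact WithLp.norm_fst_le E (w t)
      _ = (k t + 1) * ‖w t‖ + g t := by ring
  rw [hw_norm, hw_norm]
  exact norm_le_mul_exp_integral_of_eq_add_integral (hk.add intervalIntegrable_const)
    (fun t ht ↦ add_nonneg (hk₀ t ht) zero_le_one) hg hg₀ hwc hw_eq hbound

end PhaseSpace

section LocallyIntegrable

variable {E F : Type*} [NormedAddCommGroup E] [NormedAddCommGroup F]

lemma intervalIntegrable_of_locallyIntegrable {μ : Measure ℝ} {f : ℝ → E}
    (hf : LocallyIntegrable f μ) (a b : ℝ) : IntervalIntegrable f μ a b :=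
  intervalIntegrable_iff.2 <|
    (hf.integrableOn_isCompact isCompact_uIcc).mono_set uIoc_subset_uIcc

variable [NormedSpace ℝ E] [NormedSpace ℝ F]

lemma locallyIntegrable_clm_comp {X : Type*} [TopologicalSpace X] [MeasurableSpace X]
    {μ : Measure X} {f : X → E} (L : E →L[ℝ] F) (hf : LocallyIntegrable f μ) :
    LocallyIntegrable (fun x ↦ L (f x)) μ := fun x ↦
  let ⟨s, hs, hfs⟩ := hf x
  ⟨s, hs, L.integrable_comp hfs⟩

lemma intervalIntegrable_clm_apply_continuousOn {μ : Measure ℝ} {A : ℝ → E →L[ℝ] F} {w : ℝ → E}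
    {a b : ℝ} (hA : IntervalIntegrable A μ a b) (hw : ContinuousOn w (uIcc a b)) :
    IntervalIntegrable (fun t ↦ A t (w t)) μ a b := by
  obtain ⟨C, hC⟩ := isCompact_uIcc.exists_bound_of_continuousOn hw
  rw [intervalIntegrable_iff] at hA ⊢
  refine (ContinuousLinearMap.id ℝ (E →L[ℝ] F)).integrable_of_bilin_of_bdd_right C hA
    ((hw.mono uIoc_subset_uIcc).aestronglyMeasurable measurableSet_uIoc) ?_
  filter_upwards [ae_restrict_mem measurableSet_uIoc] with t ht using hC t (uIoc_subset_uIcc ht)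

end LocallyIntegrable

section Schrodinger

variable {E : Type*} [NormedAddCommGroup E] [NormedSpace ℝ E]

/-- `(u, v)` is a solution of `-u'' + q u = 0`: `u` is differentiable with derivative `v`, and the
equation holds in the integrated form `v x - v y = ∫ q u`. Functions take values in a normed space
and the potential in its bounded operators; integrability of `q` is assumed separately. -/
structure IsSchrodingerSolution_s2 (q : ℝ → E →L[ℝ] E) (u v : ℝ → E) : Prop where
  hasDerivAt (x : ℝ) : HasDerivAt u (v x) x
  eq_add_integral (x y : ℝ) : v x = v y + ∫ t in y..x, q t (u t)

namespace IsSchrodingerSolution_s2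

variable {q q₁ q₂ : ℝ → E →L[ℝ] E} {u v u₁ v₁ u₂ v₂ : ℝ → E}

lemma intervalIntegrable (h : IsSchrodingerSolution_s2 q u v) (hq : LocallyIntegrable q volume)
    (a b : ℝ) : IntervalIntegrable (fun t ↦ q t (u t)) volume a b :=
  intervalIntegrable_clm_apply_continuousOn (intervalIntegrable_of_locallyIntegrable hq a b)
    fun t _ ↦ (h.hasDerivAt t).continuousAt.continuousWithinAt

variable [CompleteSpace E]

theorem sqrt_sq_add_sq_le (h : IsSchrodingerSolution_s2 q u v) (hq : LocallyIntegrable q volume)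
    (x y : ℝ) :
    √(‖u x‖ ^ 2 + ‖v x‖ ^ 2)
      ≤ √(‖u y‖ ^ 2 + ‖v y‖ ^ 2) * Real.exp (∫ t in uIoc y x, (‖q t‖ + 1)) := by
  simpa using sqrt_sq_add_sq_le_mul_exp_integral (g := 0)
    (intervalIntegrable_of_locallyIntegrable hq y x).norm (fun _ _ ↦ norm_nonneg _)
    intervalIntegrable_const (fun _ _ ↦ le_rfl) (h.intervalIntegrable hq y x)
    (fun t _ ↦ h.hasDerivAt t) (fun t _ ↦ h.eq_add_integral t y)
    fun t _ ↦ by simpa using (q t).le_opNorm (u t)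

theorem norm_le_of_mem_uIcc (h : IsSchrodingerSolution_s2 q u v) (hq : LocallyIntegrable q volume)
    {x y t : ℝ} (ht : t ∈ uIcc y x) :
    ‖u t‖ ≤ √(‖u y‖ ^ 2 + ‖v y‖ ^ 2) * Real.exp (∫ s in uIoc y x, (‖q s‖ + 1)) := by
  have hk : IntervalIntegrable (fun s ↦ ‖q s‖ + 1) volume y x :=
    (intervalIntegrable_of_locallyIntegrable hq y x).norm.add intervalIntegrable_const
  calc ‖u t‖ ≤ √(‖u t‖ ^ 2 + ‖v t‖ ^ 2) := Real.le_sqrt_of_sq_le (by simp)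
    _ ≤ √(‖u y‖ ^ 2 + ‖v y‖ ^ 2) * Real.exp (∫ s in uIoc y t, (‖q s‖ + 1)) :=
      h.sqrt_sq_add_sq_le hq t y
    _ ≤ √(‖u y‖ ^ 2 + ‖v y‖ ^ 2) * Real.exp (∫ s in uIoc y x, (‖q s‖ + 1)) := by
      gcongr
      · exact .of_forall fun s ↦ by positivity
      · exact hk.def'
      · exact uIoc_subset_uIoc_of_uIcc_subset_uIcc (uIcc_subset_uIcc_left ht)

theorem sqrt_sub_sq_add_sub_sq_le (h₁ : IsSchrodingerSolution_s2 q₁ u₁ v₁)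
    (h₂ : IsSchrodingerSolution_s2 q₂ u₂ v₂) (hq₁ : LocallyIntegrable q₁ volume)
    (hq₂ : LocallyIntegrable q₂ volume) {x y M : ℝ} (hM : ∀ t ∈ uIcc y x, ‖u₁ t‖ ≤ M) :
    √(‖u₁ x - u₂ x‖ ^ 2 + ‖v₁ x - v₂ x‖ ^ 2)
      ≤ (√(‖u₁ y - u₂ y‖ ^ 2 + ‖v₁ y - v₂ y‖ ^ 2) + M * ∫ t in uIoc y x, ‖q₁ t - q₂ t‖)
        * Real.exp (∫ t in uIoc y x, (‖q₂ t‖ + 1)) := by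
  have hM₀ : 0 ≤ M := (norm_nonneg _).trans (hM y left_mem_uIcc)
  have hF (a b : ℝ) := (h₁.intervalIntegrable hq₁ a b).sub (h₂.intervalIntegrable hq₂ a b)
  have hv (t : ℝ) : v₁ t - v₂ t = v₁ y - v₂ y + ∫ s in y..t, (q₁ s (u₁ s) - q₂ s (u₂ s)) := by
    rw [intervalIntegral.integral_sub (h₁.intervalIntegrable hq₁ y t)
      (h₂.intervalIntegrable hq₂ y t), h₁.eq_add_integral t y, h₂.eq_add_integral t y]
    abel
  have hbound : ∀ t ∈ uIcc y x,
      ‖q₁ t (u₁ t) - q₂ t (u₂ t)‖ ≤ ‖q₂ t‖ * ‖u₁ t - u₂ t‖ + M * ‖q₁ t - q₂ t‖ := by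
    intro t ht
    calc ‖q₁ t (u₁ t) - q₂ t (u₂ t)‖ = ‖q₂ t (u₁ t - u₂ t) + (q₁ t - q₂ t) (u₁ t)‖ := by
          rw [map_sub, sub_apply]; congr 1; abel
      _ ≤ ‖q₂ t‖ * ‖u₁ t - u₂ t‖ + ‖q₁ t - q₂ t‖ * ‖u₁ t‖ :=
        norm_add_le_of_le ((q₂ t).le_opNorm _) ((q₁ t - q₂ t).le_opNorm _)
      _ ≤ ‖q₂ t‖ * ‖u₁ t - u₂ t‖ + M * ‖q₁ t - q₂ t‖ := by
        rw [mul_comm M]; gcongr; exact hM t ht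
  rw [← integral_const_mul]
  exact sqrt_sq_add_sq_le_mul_exp_integral
    (intervalIntegrable_of_locallyIntegrable hq₂ y x).norm (fun _ _ ↦ norm_nonneg _)
    ((intervalIntegrable_of_locallyIntegrable (hq₁.sub hq₂) y x).norm.const_mul M)
    (fun _ _ ↦ by positivity) (hF y x) (fun t _ ↦ (h₁.hasDerivAt t).sub (h₂.hasDerivAt t))
    (fun t _ ↦ hv t) hbound

end IsSchrodingerSolution_s2

lemma intervalIntegral_min_max_eq_integral_uIoc (f : ℝ → E) (x y : ℝ) :
    ∫ t in min x y..max x y, f t = ∫ t in uIoc y x, f t := by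
  rw [intervalIntegral.integral_of_le min_le_max, uIoc_comm, uIoc]

theorem solution_continuous_dependence_general [CompleteSpace E] {q₁ q₂ : ℝ → E →L[ℝ] E}
    {u₁ v₁ u₂ v₂ : ℝ → E} (hq₁ : LocallyIntegrable q₁ volume) (hq₂ : LocallyIntegrable q₂ volume)
    (h₁ : IsSchrodingerSolution_s2 q₁ u₁ v₁) (h₂ : IsSchrodingerSolution_s2 q₂ u₂ v₂) (x y : ℝ) :
    √(‖u₁ x - u₂ x‖ ^ 2 + ‖v₁ x - v₂ x‖ ^ 2)
      ≤ √(‖u₁ y - u₂ y‖ ^ 2 + ‖v₁ y - v₂ y‖ ^ 2)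
          * Real.exp (∫ t in min x y..max x y, (‖q₂ t‖ + 1))
        + √(‖u₁ y‖ ^ 2 + ‖v₁ y‖ ^ 2)
          * Real.exp (∫ t in min x y..max x y, (‖q₁ t‖ + ‖q₂ t‖ + 2))
          * ∫ t in min x y..max x y, ‖q₁ t - q₂ t‖ := by
  have hk {q : ℝ → E →L[ℝ] E} (hq : LocallyIntegrable q volume) :
      IntegrableOn (fun t ↦ ‖q t‖ + 1) (uIoc y x) :=
    ((intervalIntegrable_of_locallyIntegrable hq y x).norm.add intervalIntegrable_const).def'
  have hexp : Real.exp (∫ t in uIoc y x, (‖q₁ t‖ + ‖q₂ t‖ + 2))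
      = Real.exp (∫ t in uIoc y x, (‖q₁ t‖ + 1)) * Real.exp (∫ t in uIoc y x, (‖q₂ t‖ + 1)) := by
    rw [← Real.exp_add, ← integral_add (hk hq₁) (hk hq₂)]
    congr! 3
    ring
  simp only [intervalIntegral_min_max_eq_integral_uIoc, hexp]
  refine (h₁.sqrt_sub_sq_add_sub_sq_le h₂ hq₁ hq₂ (y := y)
    fun t ht ↦ h₁.norm_le_of_mem_uIcc hq₁ ht).trans_eq ?_
  ring

end Schrodinger

/-- Continuous dependence of solutions of `-u'' + q u = 0` on the potential `q`. -/
theorem solution_continuous_dependence (q₁ q₂ u₁ v₁ u₂ v₂ : ℝ → ℝ)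
    (hq₁ : LocallyIntegrable q₁ volume) (hq₂ : LocallyIntegrable q₂ volume)
    (hu₁ : ∀ x : ℝ, HasDerivAt u₁ (v₁ x) x)
    (hv₁ : ∀ x y : ℝ, v₁ x = v₁ y + ∫ t in y..x, q₁ t * u₁ t)
    (hu₂ : ∀ x : ℝ, HasDerivAt u₂ (v₂ x) x)
    (hv₂ : ∀ x y : ℝ, v₂ x = v₂ y + ∫ t in y..x, q₂ t * u₂ t) :
    ∀ x y : ℝ,
      Real.sqrt ((u₁ x - u₂ x) ^ 2 + (v₁ x - v₂ x) ^ 2)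
        ≤ Real.sqrt ((u₁ y - u₂ y) ^ 2 + (v₁ y - v₂ y) ^ 2)
            * Real.exp (∫ t in min x y..max x y, (|q₂ t| + 1))
          + Real.sqrt (u₁ y ^ 2 + v₁ y ^ 2)
            * Real.exp (∫ t in min x y..max x y, (|q₁ t| + |q₂ t| + 2))
            * ∫ t in min x y..max x y, |q₁ t - q₂ t| := by
  simpa [← map_sub] using solution_continuous_dependence_general
    (locallyIntegrable_clm_comp (.mul ℝ ℝ) hq₁) (locallyIntegrable_clm_comp (.mul ℝ ℝ) hq₂)
    ⟨hu₁, hv₁⟩ ⟨hu₂, hv₂⟩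
end

section
/- For all positive real numbers ℓ and M there exists a constant C > 0 such that for every c ∈ ℝ, every locally integrable q : ℝ → ℝ with ∫_c^{c+ℓ} |q(t)| dt ≤ M, and every solution (u, v) of −u″ + q·u = 0, one has ∫_c^{c+ℓ} u(t)² dt ≥ C·(u(c)² + v(c)²). -/
open MeasureTheory

/-!
Let `A = ‖u x₀‖` be the maximum of `‖u‖` on `[a, b]`. The equation makes `v = u'` oscillate by at
most `A ∫ ‖q‖`, so `v x` differs by at most that much from the slope `(u b - u a) / (b - a)`, whose
norm is at most `2 A / (b - a)`. Hence `‖v‖ ≤ K A` with `K = 2 / (b - a) + ∫ ‖q‖`: the maximum `A`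
controls the Cauchy data at every point, and `‖u‖ ≥ A / 2` within distance `1 / (2 K)` of `x₀`.
-/

section

open Set

theorem exists_Icc_add_subset_Icc {a b d x : ℝ} (hd : 0 ≤ d) (hdb : d ≤ b - a)
    (hx : x ∈ Icc a b) : ∃ s, x ∈ Icc s (s + d) ∧ Icc s (s + d) ⊆ Icc a b := by
  refine ⟨max a (x - d), ⟨max_le hx.1 (by linarith), ?_⟩, Icc_subset_Icc (le_max_left _ _) ?_⟩
  · linarith [le_max_right a (x - d)]
  · rw [← le_sub_iff_add_le]
    exact max_le (by linarith) (by linarith [hx.2])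

theorem mul_le_integral_of_forall_abs_sub_le {f : ℝ → ℝ} {a b d m x : ℝ}
    (hf : IntervalIntegrable f volume a b) (hf₀ : ∀ t ∈ Icc a b, 0 ≤ f t) (hd : 0 ≤ d)
    (hdb : d ≤ b - a) (hx : x ∈ Icc a b) (hm : ∀ t ∈ Icc a b, |t - x| ≤ d → m ≤ f t) :
    d * m ≤ ∫ t in a..b, f t := by
  obtain ⟨s, hxs, hs⟩ := exists_Icc_add_subset_Icc hd hdb hx
  have hsd : s ≤ s + d := by linarith
  obtain ⟨has, hsb⟩ := (Icc_subset_Icc_iff hsd).1 hs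
  have hab : a ≤ b := hx.1.trans hx.2
  have hfs : IntervalIntegrable f volume s (s + d) :=
    hf.mono_set (by rwa [uIcc_of_le hsd, uIcc_of_le hab])
  have hms : ∀ t ∈ Icc s (s + d), m ≤ f t := fun t ht ↦
    hm t (hs ht) (abs_le.2 ⟨by linarith [ht.1, hxs.2], by linarith [ht.2, hxs.1]⟩)
  calc d * m = ∫ _ in s..s + d, m := by simp
    _ ≤ ∫ t in s..s + d, f t :=
      intervalIntegral.integral_mono_on hsd intervalIntegrable_const hfs hms
    _ ≤ ∫ t in a..b, f t :=
      intervalIntegral.integral_mono_interval has hsd hsb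
        (ae_restrict_of_forall_mem measurableSet_Ioc fun t ht ↦ hf₀ t (Ioc_subset_Icc_self ht)) hf

variable {E : Type*} [NormedAddCommGroup E] [NormedSpace ℝ E] {u v : ℝ → E} {a b A K x : ℝ}

theorem norm_deriv_le_of_norm_le_of_norm_deriv_sub_le {D : ℝ} (hab : a < b)
    (hu : ∀ t ∈ Icc a b, HasDerivWithinAt u (v t) (Icc a b) t)
    (hA : ∀ t ∈ Icc a b, ‖u t‖ ≤ A) (hD : ∀ t ∈ Icc a b, ‖v t - v x‖ ≤ D) :
    ‖v x‖ ≤ 2 / (b - a) * A + D := by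
  have hba : 0 < b - a := sub_pos.2 hab
  have ha := hA a (left_mem_Icc.2 hab.le)
  have hb := hA b (right_mem_Icc.2 hab.le)
  have htangent : ‖(u b - u a) - (b - a) • v x‖ ≤ D * (b - a) := by
    have hderiv : ∀ t ∈ Icc a b,
        HasDerivWithinAt (fun s ↦ u s - s • v x) (v t - v x) (Icc a b) t := fun t ht ↦ by
      simpa using (hu t ht).fun_sub ((hasDerivWithinAt_id t _).smul_const (v x))
    have hmean := norm_image_sub_le_of_norm_deriv_le_segment' hderiv
      (fun t ht ↦ hD t (Ico_subset_Icc_self ht)) b (right_mem_Icc.2 hab.le)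
    rwa [sub_sub_sub_comm, ← sub_smul] at hmean
  have hscaled : (b - a) * ‖v x‖ ≤ 2 * A + D * (b - a) :=
    calc (b - a) * ‖v x‖ = ‖(b - a) • v x‖ := by rw [norm_smul, Real.norm_of_nonneg hba.le]
      _ ≤ ‖u b - u a‖ + ‖(u b - u a) - (b - a) • v x‖ := norm_le_norm_add_norm_sub _ _
      _ ≤ 2 * A + D * (b - a) := by linarith [norm_sub_le (u b) (u a)]
  calc ‖v x‖ ≤ (2 * A + D * (b - a)) / (b - a) := by rwa [le_div_iff₀' hba]
    _ = 2 / (b - a) * A + D := by field_simp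

theorem mul_half_norm_rpow_le_integral_norm_rpow {d p : ℝ}
    (hu : ∀ t ∈ Icc a b, HasDerivWithinAt u (v t) (Icc a b) t) (hx : x ∈ Icc a b)
    (hv : ∀ t ∈ Icc a b, ‖v t‖ ≤ K * ‖u x‖) (hd : 0 ≤ d) (hdb : d ≤ b - a) (hKd : K * d ≤ 1 / 2)
    (hp : 0 ≤ p) : d * (‖u x‖ / 2) ^ p ≤ ∫ t in a..b, ‖u t‖ ^ p := by
  have hcont : ContinuousOn (fun t ↦ ‖u t‖ ^ p) (Icc a b) :=
    ContinuousOn.rpow_const (fun t ht ↦ (hu t ht).continuousWithinAt.norm) fun _ _ ↦ Or.inr hp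
  refine mul_le_integral_of_forall_abs_sub_le (hcont.intervalIntegrable_of_Icc (hx.1.trans hx.2))
    (fun _ _ ↦ by positivity) hd hdb hx fun t ht htx ↦ Real.rpow_le_rpow (by positivity) ?_ hp
  have hlip : ‖u t - u x‖ ≤ ‖u x‖ / 2 :=
    calc ‖u t - u x‖ ≤ K * ‖u x‖ * ‖t - x‖ :=
          (convex_Icc a b).norm_image_sub_le_of_norm_hasDerivWithin_le hu hv hx ht
      _ ≤ K * ‖u x‖ * d :=
          mul_le_mul_of_nonneg_left htx ((norm_nonneg _).trans (hv x hx))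
      _ = ‖u x‖ * (K * d) := by ring
      _ ≤ ‖u x‖ / 2 := by linarith [mul_le_mul_of_nonneg_left hKd (norm_nonneg (u x))]
  linarith [norm_le_norm_add_norm_sub (u t) (u x)]

/-- The differential inequality `‖u''‖ ≤ g ‖u‖` on `[a, b]` for a nonnegative integrable weight `g`,
in integrated form: `v` is the derivative of `u` on `[a, b]`, and the second derivative of `u` only
enters through the increments of `v`. -/
structure IsSchrodingerInequalitySolution (g : ℝ → ℝ) (u v : ℝ → E) (a b : ℝ) : Prop where
  intervalIntegrable : IntervalIntegrable g volume a b
  nonneg : ∀ t ∈ Icc a b, 0 ≤ g t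
  hasDerivWithinAt : ∀ t ∈ Icc a b, HasDerivWithinAt u (v t) (Icc a b) t
  norm_sub_le_integral : ∀ x ∈ Icc a b, ∀ y ∈ Icc a b, x ≤ y →
    ‖v y - v x‖ ≤ ∫ t in x..y, g t * ‖u t‖

namespace IsSchrodingerInequalitySolution

variable {g : ℝ → ℝ}

theorem of_eq_add_integral {𝕜 : Type*} [NormedField 𝕜] [NormedSpace 𝕜 E] {q : ℝ → 𝕜}
    (hq : IntervalIntegrable q volume a b)
    (hu : ∀ t ∈ Icc a b, HasDerivWithinAt u (v t) (Icc a b) t)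
    (hv : ∀ x ∈ Icc a b, ∀ y ∈ Icc a b, v y = v x + ∫ t in x..y, q t • u t) :
    IsSchrodingerInequalitySolution (fun t ↦ ‖q t‖) u v a b where
  intervalIntegrable := hq.norm
  nonneg _ _ := norm_nonneg _
  hasDerivWithinAt := hu
  norm_sub_le_integral x hx y hy hxy := by
    rw [hv x hx y hy, add_sub_cancel_left]
    simpa only [norm_smul] using
      intervalIntegral.norm_integral_le_integral_norm (f := fun t ↦ q t • u t) hxy

theorem continuousOn (h : IsSchrodingerInequalitySolution g u v a b) : ContinuousOn u (Icc a b) :=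
  fun t ht ↦ (h.hasDerivWithinAt t ht).continuousWithinAt

theorem integral_nonneg (h : IsSchrodingerInequalitySolution g u v a b) (hab : a ≤ b) :
    0 ≤ ∫ t in a..b, g t :=
  intervalIntegral.integral_nonneg hab h.nonneg

theorem norm_sub_le (h : IsSchrodingerInequalitySolution g u v a b)
    (hA : ∀ t ∈ Icc a b, ‖u t‖ ≤ A) {y : ℝ} (hx : x ∈ Icc a b) (hy : y ∈ Icc a b) :
    ‖v y - v x‖ ≤ (∫ t in a..b, g t) * A := by
  wlog hxy : x ≤ y generalizing x y
  · rw [norm_sub_rev]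
    exact this hy hx (le_of_not_ge hxy)
  have hab : a ≤ b := hx.1.trans hx.2
  have hsub : Icc x y ⊆ Icc a b := Icc_subset_Icc hx.1 hy.2
  have hg : IntervalIntegrable g volume x y :=
    h.intervalIntegrable.mono_set (by rwa [uIcc_of_le hxy, uIcc_of_le hab])
  have hcont : ContinuousOn (fun t ↦ ‖u t‖) (uIcc x y) := by
    rw [uIcc_of_le hxy]
    exact (h.continuousOn.mono hsub).norm
  calc ‖v y - v x‖ ≤ ∫ t in x..y, g t * ‖u t‖ := h.norm_sub_le_integral x hx y hy hxy
    _ ≤ ∫ t in x..y, g t * A :=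
      intervalIntegral.integral_mono_on hxy (hg.mul_continuousOn hcont) (hg.mul_const A)
        fun t ht ↦ mul_le_mul_of_nonneg_left (hA t (hsub ht)) (h.nonneg t (hsub ht))
    _ = (∫ t in x..y, g t) * A := intervalIntegral.integral_mul_const _ _
    _ ≤ (∫ t in a..b, g t) * A :=
      mul_le_mul_of_nonneg_right
        (intervalIntegral.integral_mono_interval hx.1 hxy hy.2
          (ae_restrict_of_forall_mem measurableSet_Ioc fun t ht ↦
            h.nonneg t (Ioc_subset_Icc_self ht)) h.intervalIntegrable)
        ((norm_nonneg _).trans (hA x hx))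

theorem norm_deriv_le (h : IsSchrodingerInequalitySolution g u v a b) (hab : a < b)
    (hA : ∀ t ∈ Icc a b, ‖u t‖ ≤ A) (hx : x ∈ Icc a b) :
    ‖v x‖ ≤ (2 / (b - a) + ∫ t in a..b, g t) * A := by
  rw [add_mul]
  exact norm_deriv_le_of_norm_le_of_norm_deriv_sub_le hab h.hasDerivWithinAt hA fun _ ht ↦
    h.norm_sub_le hA hx ht

end IsSchrodingerInequalitySolution

theorem solution_L2_lower_bound_general {g : ℝ → ℝ} {p : ℝ}
    (h : IsSchrodingerInequalitySolution g u v a b) (hab : a < b)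
    (hK : 2 / (b - a) + ∫ t in a..b, g t ≤ K) (hp : 0 ≤ p) (hx : x ∈ Icc a b) :
    (1 / 2) ^ p / (2 * K * (1 + K ^ p)) * (‖u x‖ ^ p + ‖v x‖ ^ p) ≤ ∫ t in a..b, ‖u t‖ ^ p := by
  obtain ⟨x₀, hx₀, hmax⟩ := isCompact_Icc.exists_isMaxOn ⟨x, hx⟩ h.continuousOn.norm
  have hba : 0 < b - a := sub_pos.2 hab
  have hKba : 2 / (b - a) ≤ K := by linarith [h.integral_nonneg hab.le]
  have hK₀ : 0 < K := (by positivity : 0 < 2 / (b - a)).trans_le hKba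
  have hd : 1 / (2 * K) ≤ b - a := by
    rw [div_le_iff₀ hba] at hKba
    rw [div_le_iff₀ (by positivity)]
    linarith
  have hv : ∀ t ∈ Icc a b, ‖v t‖ ≤ K * ‖u x₀‖ := fun t ht ↦
    (h.norm_deriv_le hab hmax ht).trans (mul_le_mul_of_nonneg_right hK (norm_nonneg _))
  have hdata : ‖u x‖ ^ p + ‖v x‖ ^ p ≤ (1 + K ^ p) * ‖u x₀‖ ^ p := by
    rw [add_mul, one_mul, ← Real.mul_rpow hK₀.le (norm_nonneg _)]
    exact add_le_add (Real.rpow_le_rpow (norm_nonneg _) (hmax hx) hp)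
      (Real.rpow_le_rpow (norm_nonneg _) (hv x hx) hp)
  calc (1 / 2) ^ p / (2 * K * (1 + K ^ p)) * (‖u x‖ ^ p + ‖v x‖ ^ p)
      ≤ (1 / 2) ^ p / (2 * K * (1 + K ^ p)) * ((1 + K ^ p) * ‖u x₀‖ ^ p) :=
        mul_le_mul_of_nonneg_left hdata (by positivity)
    _ = 1 / (2 * K) * (‖u x₀‖ / 2) ^ p := by
        rw [div_eq_mul_one_div ‖u x₀‖, Real.mul_rpow (norm_nonneg _) (by norm_num)]
        field_simp
    _ ≤ ∫ t in a..b, ‖u t‖ ^ p :=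
        mul_half_norm_rpow_le_integral_norm_rpow h.hasDerivWithinAt hx₀ hv (by positivity) hd
          (le_of_eq (by field_simp)) hp

end

/-- Uniform lower bound on the local `L²` norm of solutions of `-u'' + q u = 0`. -/
theorem solution_L2_lower_bound :
    ∀ ℓ M : ℝ, 0 < ℓ → 0 < M →
      ∃ C : ℝ, 0 < C ∧
        ∀ (c : ℝ) (q u v : ℝ → ℝ),
          LocallyIntegrable q volume →
          (∫ t in c..c + ℓ, |q t|) ≤ M →
          (∀ x : ℝ, HasDerivAt u (v x) x) →
          (∀ x y : ℝ, v x = v y + ∫ t in y..x, q t * u t) →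
          C * (u c ^ 2 + v c ^ 2) ≤ ∫ t in c..c + ℓ, u t ^ 2 := by
  intro ℓ M hℓ hM
  refine ⟨(1 / 2) ^ 2 / (2 * (2 / ℓ + M) * (1 + (2 / ℓ + M) ^ 2)), by positivity, ?_⟩
  intro c q u v hq hqM hu hv
  have hc : c < c + ℓ := lt_add_of_pos_right c hℓ
  have hsol : IsSchrodingerInequalitySolution (fun t ↦ |q t|) u v c (c + ℓ) :=
    .of_eq_add_integral (hq.integrableOn_isCompact isCompact_uIcc).intervalIntegrable
      (fun t _ ↦ (hu t).hasDerivWithinAt) fun x _ y _ ↦ hv y x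
  have hK : 2 / (c + ℓ - c) + ∫ t in c..c + ℓ, |q t| ≤ 2 / ℓ + M := by
    rw [add_sub_cancel_left]
    gcongr
  simpa only [Real.rpow_two, Real.norm_eq_abs, sq_abs] using
    solution_L2_lower_bound_general hsol hc hK zero_le_two (Set.left_mem_Icc.2 hc.le)
end

section
/- Let q : ℝ → ℝ be locally integrable, let (u, v) be a solution of −u″ + q·u = 0 with (u(x), v(x)) ≠ (0, 0) for all x, and let (R, φ) be Prüfer variables for (u, v). Then at every point x at which v is differentiable with v′(x) = q(x)·u(x), the functions φ and R are differentiable at x and satisfy φ′(x) = 1 − (1 + q(x))·sin²(φ(x)) and (R²)′(x)/R(x)² = (1 + q(x))·sin(2·φ(x)). -/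
open MeasureTheory

/-! Near `x₀`, rotating the vector `(v, u) = R (cos φ, sin φ)` by `-φ x₀` gives
`R (cos (φ - φ x₀), sin (φ - φ x₀))`. Since `φ` is continuous, `φ - φ x₀` stays in `(-π/2, π/2)` and
is the arctangent of the ratio of the rotated coordinates, so `φ` inherits differentiability from
`u` and `v`. Then so does `R = u sin φ + v cos φ`; the term of `R'` containing `φ'` vanishes because
`u cos φ = v sin φ = R sin φ cos φ`. -/

section PolarCoordinates

open Real Filter
open scoped Topology

theorem eq_add_arctan_of_abs_sub_lt {r θ θ₀ : ℝ} (hr : r ≠ 0) (hθ : |θ - θ₀| < π / 2) :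
    θ = θ₀ + arctan ((r * sin θ * cos θ₀ - r * cos θ * sin θ₀) /
      (r * sin θ * sin θ₀ + r * cos θ * cos θ₀)) := by
  obtain ⟨h_lower, h_upper⟩ := abs_lt.mp hθ
  have h_num : r * sin θ * cos θ₀ - r * cos θ * sin θ₀ = r * sin (θ - θ₀) := by
    rw [sin_sub]
    ring
  have h_den : r * sin θ * sin θ₀ + r * cos θ * cos θ₀ = r * cos (θ - θ₀) := by
    rw [cos_sub]
    ring
  rw [h_num, h_den, mul_div_mul_left _ _ hr, ← tan_eq_sin_div_cos, arctan_tan h_lower h_upper,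
    add_sub_cancel]

variable {u v R φ : ℝ → ℝ} {u' v' x₀ : ℝ}

theorem eventuallyEq_polar_radius
    (huR : ∀ᶠ x in 𝓝 x₀, u x = R x * sin (φ x)) (hvR : ∀ᶠ x in 𝓝 x₀, v x = R x * cos (φ x)) :
    R =ᶠ[𝓝 x₀] fun x => u x * sin (φ x) + v x * cos (φ x) := by
  filter_upwards [huR, hvR] with x hux hvx
  rw [hux, hvx]
  linear_combination -R x * sin_sq_add_cos_sq (φ x)

theorem continuousAt_polar_radius
    (hu : ContinuousAt u x₀) (hv : ContinuousAt v x₀) (hφ : ContinuousAt φ x₀)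
    (huR : ∀ᶠ x in 𝓝 x₀, u x = R x * sin (φ x)) (hvR : ∀ᶠ x in 𝓝 x₀, v x = R x * cos (φ x)) :
    ContinuousAt R x₀ :=
  ((hu.mul (continuous_sin.continuousAt.comp hφ)).add
    (hv.mul (continuous_cos.continuousAt.comp hφ))).congr (eventuallyEq_polar_radius huR hvR).symm

theorem eventuallyEq_polar_angle
    (hR : ContinuousAt R x₀) (hR₀ : R x₀ ≠ 0) (hφ : ContinuousAt φ x₀)
    (huR : ∀ᶠ x in 𝓝 x₀, u x = R x * sin (φ x)) (hvR : ∀ᶠ x in 𝓝 x₀, v x = R x * cos (φ x)) :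
    φ =ᶠ[𝓝 x₀] fun x => φ x₀ + arctan ((u x * cos (φ x₀) - v x * sin (φ x₀)) /
      (u x * sin (φ x₀) + v x * cos (φ x₀))) := by
  have h_close : ∀ᶠ x in 𝓝 x₀, |φ x - φ x₀| < π / 2 :=
    hφ.eventually (Metric.ball_mem_nhds (φ x₀) pi_div_two_pos)
  filter_upwards [hR.eventually_ne hR₀, h_close, huR, hvR] with x hRx hφx hux hvx
  rw [hux, hvx]
  exact eq_add_arctan_of_abs_sub_lt hRx hφx

theorem hasDerivAt_polar_angle
    (hu : HasDerivAt u u' x₀) (hv : HasDerivAt v v' x₀) (hφ : ContinuousAt φ x₀) (hR₀ : R x₀ ≠ 0)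
    (huR : ∀ᶠ x in 𝓝 x₀, u x = R x * sin (φ x)) (hvR : ∀ᶠ x in 𝓝 x₀, v x = R x * cos (φ x)) :
    HasDerivAt φ ((u' * cos (φ x₀) - v' * sin (φ x₀)) / R x₀) x₀ := by
  have hR := continuousAt_polar_radius hu.continuousAt hv.continuousAt hφ huR hvR
  have h_num₀ : u x₀ * cos (φ x₀) - v x₀ * sin (φ x₀) = 0 := by
    rw [huR.self_of_nhds, hvR.self_of_nhds]
    ring
  have h_den₀ : u x₀ * sin (φ x₀) + v x₀ * cos (φ x₀) = R x₀ :=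
    (eventuallyEq_polar_radius huR hvR).self_of_nhds.symm
  have h_num := (hu.mul_const (cos (φ x₀))).fun_sub (hv.mul_const (sin (φ x₀)))
  have h_den := (hu.mul_const (sin (φ x₀))).fun_add (hv.mul_const (cos (φ x₀)))
  have h_arctan := (h_num.fun_div h_den (h_den₀.trans_ne hR₀)).arctan.const_add (φ x₀)
  refine (h_arctan.congr_of_eventuallyEq
    (eventuallyEq_polar_angle hR hR₀ hφ huR hvR)).congr_deriv ?_
  rw [h_num₀, h_den₀]
  field_simp
  ring

theorem hasDerivAt_polar_radius
    (hu : HasDerivAt u u' x₀) (hv : HasDerivAt v v' x₀) (hφ : ContinuousAt φ x₀) (hR₀ : R x₀ ≠ 0)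
    (huR : ∀ᶠ x in 𝓝 x₀, u x = R x * sin (φ x)) (hvR : ∀ᶠ x in 𝓝 x₀, v x = R x * cos (φ x)) :
    HasDerivAt R (u' * sin (φ x₀) + v' * cos (φ x₀)) x₀ := by
  have hφ' := hasDerivAt_polar_angle hu hv hφ hR₀ huR hvR
  refine (((hu.fun_mul hφ'.sin).fun_add (hv.fun_mul hφ'.cos)).congr_of_eventuallyEq
    (eventuallyEq_polar_radius huR hvR)).congr_deriv ?_
  rw [huR.self_of_nhds, hvR.self_of_nhds]
  ring

theorem prufer_odes_general {q₀ : ℝ}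
    (hu : HasDerivAt u (v x₀) x₀) (hv : HasDerivAt v (q₀ * u x₀) x₀)
    (hφ : ContinuousAt φ x₀) (hR₀ : R x₀ ≠ 0)
    (huR : ∀ᶠ x in 𝓝 x₀, u x = R x * sin (φ x)) (hvR : ∀ᶠ x in 𝓝 x₀, v x = R x * cos (φ x)) :
    HasDerivAt φ (1 - (1 + q₀) * sin (φ x₀) ^ 2) x₀ ∧
      DifferentiableAt ℝ R x₀ ∧
      HasDerivAt (fun x => R x ^ 2) ((1 + q₀) * sin (2 * φ x₀) * R x₀ ^ 2) x₀ := by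
  have hφ' := hasDerivAt_polar_angle hu hv hφ hR₀ huR hvR
  have hR' := hasDerivAt_polar_radius hu hv hφ hR₀ huR hvR
  rw [huR.self_of_nhds, hvR.self_of_nhds] at hφ' hR'
  refine ⟨hφ'.congr_deriv ?_, hR'.differentiableAt, (hR'.fun_pow 2).congr_deriv ?_⟩
  · field_simp
    linear_combination sin_sq_add_cos_sq (φ x₀)
  · rw [sin_two_mul]
    ring

end PolarCoordinates

/-- The Prüfer differential equations: wherever `v' = q u`, the Prüfer phase satisfies
`φ' = 1 - (1+q) sin² φ` and the Prüfer amplitude satisfies `(R²)' / R² = (1+q) sin(2φ)`. -/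
theorem prufer_odes (q u v R φ : ℝ → ℝ)
    (hq : LocallyIntegrable q volume)
    (hu : ∀ x : ℝ, HasDerivAt u (v x) x)
    (hv : ∀ x y : ℝ, v x = v y + ∫ t in y..x, q t * u t)
    (hne : ∀ x : ℝ, (u x, v x) ≠ (0, 0))
    (hR : ∀ x : ℝ, 0 < R x)
    (hφ : Continuous φ)
    (huR : ∀ x : ℝ, u x = R x * Real.sin (φ x))
    (hvR : ∀ x : ℝ, v x = R x * Real.cos (φ x)) :
    ∀ x : ℝ, HasDerivAt v (q x * u x) x →
      HasDerivAt φ (1 - (1 + q x) * Real.sin (φ x) ^ 2) x ∧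
      DifferentiableAt ℝ R x ∧
      HasDerivAt (fun t => R t ^ 2) ((1 + q x) * Real.sin (2 * φ x) * R x ^ 2) x :=
  fun x hvx => prufer_odes_general (hu x) hvx hφ.continuousAt (hR x).ne' (.of_forall huR)
    (.of_forall hvR)
end

section
/- Let W, V : ℝ → ℝ be locally integrable and let c, θ ∈ ℝ. Suppose that for each λ ∈ ℝ, (u(·,λ), v(·,λ)) is a solution of −u″ + (W + λ·V)·u = 0 with u(c,λ) = sin θ and v(c,λ) = cos θ, and that R : ℝ×ℝ → (0,∞) and φ : ℝ×ℝ → ℝ satisfy u(x,λ) = R(x,λ)·sin(φ(x,λ)), v(x,λ) = R(x,λ)·cos(φ(x,λ)) and φ(c,λ) = θ for all x, λ, with φ jointly continuous. Then for every fixed x ∈ ℝ, the function λ ↦ φ(x,λ) is differentiable on ℝ with derivative ∂φ/∂λ(x,λ) = −R(x,λ)^{−2}·∫_c^x V(t)·u(t,λ)² dt. -/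
open MeasureTheory

/-!
For two couplings `l` and `m`, the Wronskian identity reads
`R(x,l) R(x,m) sin (φ(x,m) - φ(x,l)) = -(m - l) ∫_c^x V u(·,l) u(·,m)`, because both solutions have
the same data at `c`. Divide by `m - l` and let `m → l`: a Grönwall estimate for the difference of
the two solutions gives the convergence of the right side and of `R(x,m)`, while continuity of the
phase selects the branch on which the sine can be inverted.
-/

section PruferPhase

open Set Filter Topology

theorem absolutelyContinuousOnInterval_comp_lipschitzOnWith {X Y : Type*} [PseudoMetricSpace X]
    [PseudoMetricSpace Y] {f : ℝ → X} {g : X → Y} {K : NNReal} {a b : ℝ}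
    (hg : LipschitzOnWith K g (f '' uIcc a b)) (hf : AbsolutelyContinuousOnInterval f a b) :
    AbsolutelyContinuousOnInterval (fun x ↦ g (f x)) a b := by
  refine squeeze_zero' (.of_forall fun _ ↦ Finset.sum_nonneg fun _ _ ↦ dist_nonneg) ?_
    (by simpa using Tendsto.const_mul (K : ℝ) hf)
  refine eventually_inf_principal.mpr (.of_forall fun E hE ↦ ?_)
  rw [Finset.mul_sum]
  exact Finset.sum_le_sum fun i hi ↦ hg.dist_le_mul _ (mem_image_of_mem f (hE.1 i hi).1) _
    (mem_image_of_mem f (hE.1 i hi).2)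

theorem absolutelyContinuousOnInterval_comp_contDiffOn {F : Type*} [NormedAddCommGroup F]
    [NormedSpace ℝ F] {f : ℝ → ℝ} {g : ℝ → F} {a b : ℝ} (hg : ContDiffOn ℝ 1 g (f '' uIcc a b))
    (hf : AbsolutelyContinuousOnInterval f a b) :
    AbsolutelyContinuousOnInterval (fun x ↦ g (f x)) a b := by
  have hconvex : Convex ℝ (f '' uIcc a b) :=
    (isPreconnected_uIcc.image f hf.continuousOn).ordConnected.convex
  have hcompact : IsCompact (f '' uIcc a b) := isCompact_uIcc.image_of_continuousOn hf.continuousOn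
  obtain ⟨K, hK⟩ := hg.exists_lipschitzOnWith one_ne_zero hconvex hcompact
  exact absolutelyContinuousOnInterval_comp_lipschitzOnWith hK hf

section Gronwall

variable {f k : ℝ → ℝ} {a b : ℝ}

theorem le_mul_exp_of_abs_deriv_le_of_pos (hf : AbsolutelyContinuousOnInterval f a b)
    (hk : IntervalIntegrable k volume a b) (hpos : ∀ x ∈ uIcc a b, 0 < f x)
    (hderiv : ∀ᵐ x, x ∈ uIcc a b → |deriv f x| ≤ k x * f x) :
    f b ≤ f a * Real.exp |∫ x in a..b, k x| := by
  have hlog : AbsolutelyContinuousOnInterval (fun x ↦ Real.log (f x)) a b :=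
    absolutelyContinuousOnInterval_comp_contDiffOn (g := Real.log)
      (Real.contDiffOn_log.mono (by rintro _ ⟨x, hx, rfl⟩; exact (hpos x hx).ne')) hf
  have hbound : ∀ᵐ x ∂volume.restrict (uIoc a b), ‖deriv (fun y ↦ Real.log (f y)) x‖ ≤ k x := by
    rw [ae_restrict_iff' measurableSet_uIoc]
    filter_upwards [hf.ae_differentiableAt, hderiv] with x hdiff hx hxI
    have hxI := uIoc_subset_uIcc hxI
    have hfx := hpos x hxI
    rw [((hdiff hxI).hasDerivAt.log hfx.ne').deriv, Real.norm_eq_abs, abs_div, abs_of_pos hfx]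
    exact (div_le_iff₀ hfx).mpr (hx hxI)
  have hle : Real.log (f b) - Real.log (f a) ≤ |∫ x in a..b, k x| := by
    refine (le_abs_self _).trans ?_
    rw [← hlog.integral_deriv_eq_sub, ← Real.norm_eq_abs]
    exact intervalIntegral.norm_integral_le_abs_of_norm_le hbound hk
  have hfa := hpos a left_mem_uIcc
  have hfb := hpos b right_mem_uIcc
  rw [← Real.exp_log hfa, ← Real.exp_add, ← Real.log_le_iff_le_exp hfb]
  linarith

theorem le_mul_exp_of_abs_deriv_le (hf : AbsolutelyContinuousOnInterval f a b)
    (hk : IntervalIntegrable k volume a b) (hk0 : ∀ x, 0 ≤ k x) (hf0 : ∀ x ∈ uIcc a b, 0 ≤ f x)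
    (hderiv : ∀ᵐ x, x ∈ uIcc a b → |deriv f x| ≤ k x * f x) :
    f b ≤ f a * Real.exp |∫ x in a..b, k x| := by
  have hshift : ∀ δ > 0, f b + δ ≤ (f a + δ) * Real.exp |∫ x in a..b, k x| := by
    intro δ hδ
    refine le_mul_exp_of_abs_deriv_le_of_pos (f := fun x ↦ f x + δ)
      (hf.fun_add (contDiff_const (n := 1)).contDiffOn.absolutelyContinuousOnInterval) hk
      (fun x hx ↦ by linarith [hf0 x hx]) ?_
    filter_upwards [hderiv] with x hx hxI
    rw [deriv_add_const]
    nlinarith [hx hxI, hk0 x]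
  have hlim : Tendsto (fun δ : ℝ ↦ (f a + δ) * Real.exp |∫ x in a..b, k x| - δ) (𝓝[>] 0)
      (𝓝 (f a * Real.exp |∫ x in a..b, k x|)) := by
    have : Continuous fun δ : ℝ ↦ (f a + δ) * Real.exp |∫ x in a..b, k x| - δ := by fun_prop
    simpa using (this.tendsto 0).mono_left nhdsWithin_le_nhds
  refine ge_of_tendsto hlim ?_
  filter_upwards [self_mem_nhdsWithin] with δ hδ
  linarith [hshift δ hδ]

end Gronwall

theorem continuousAt_of_abs_sub_le_mul_sqrt {f : ℝ → ℝ} {C l : ℝ}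
    (hf : ∀ m, |m - l| ≤ 1 → |f m - f l| ≤ C * √|m - l|) : ContinuousAt f l := by
  have hnear : ∀ᶠ m in 𝓝 l, |m - l| ≤ 1 := Metric.closedBall_mem_nhds l one_pos
  have hlim : Tendsto (fun m ↦ C * √|m - l|) (𝓝 l) (𝓝 0) := by
    have : Continuous fun m ↦ C * √|m - l| := by fun_prop
    simpa using this.tendsto l
  exact tendsto_iff_dist_tendsto_zero.mpr
    (squeeze_zero' (.of_forall fun _ ↦ dist_nonneg) (hnear.mono hf) hlim)

-- The left side is the derivative of `w ^ 2 + z ^ 2` along `w' = z`, `z' = (p + ε s) w + ε s u`.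
theorem abs_energy_rate_le {p s ε u w z : ℝ} (hε : |ε| ≤ 1) :
    |2 * w * z + 2 * z * ((p + ε * s) * w + ε * s * u)| ≤
      (|1 + p| + |s| * (u ^ 2 + 2)) * (w ^ 2 + z ^ 2 + |ε|) := by
  have two_mul_abs_le (x y : ℝ) : |2 * x * y| ≤ x ^ 2 + y ^ 2 := by
    simpa only [abs_mul, abs_two, sq_abs] using two_mul_le_add_sq |x| |y|
  calc |2 * w * z + 2 * z * ((p + ε * s) * w + ε * s * u)|
    _ = |(1 + p) * (2 * w * z) + (s * (ε * (2 * w * z)) + s * (ε * (2 * z * u)))| := by ring_nf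
    _ ≤ |1 + p| * |2 * w * z| + (|s| * (|ε| * |2 * w * z|) + |s| * (|ε| * |2 * z * u|)) := by
      simp only [← abs_mul]
      exact (abs_add_le _ _).trans (by gcongr; exact abs_add_le _ _)
    _ ≤ |1 + p| * (w ^ 2 + z ^ 2) +
          (|s| * (1 * (w ^ 2 + z ^ 2)) + |s| * (1 * z ^ 2 + |ε| * u ^ 2)) := by
      gcongr
      · exact two_mul_abs_le w z
      · exact two_mul_abs_le w z
      · nlinarith [mul_le_mul_of_nonneg_left (two_mul_abs_le z u) (abs_nonneg ε),
          mul_le_mul_of_nonneg_right hε (sq_nonneg z)]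
    _ ≤ (|1 + p| + |s| * (u ^ 2 + 2)) * (w ^ 2 + z ^ 2 + |ε|) := by
      have : 0 ≤ |1 + p| * |ε| + |s| * (w ^ 2 + u ^ 2 * (w ^ 2 + z ^ 2) + 2 * |ε|) := by positivity
      linarith

/-- Solutions of `-u'' + q u = 0` for merely locally integrable `q`: the second component `v = u'`
satisfies the integrated equation, so `v' = q u` is required only almost everywhere. -/
structure IsSchrodingerSolution_s7 (q u v : ℝ → ℝ) : Prop where
  hasDerivAt_fst : ∀ x, HasDerivAt u (v x) x
  snd_eq_add_integral : ∀ x y, v x = v y + ∫ t in y..x, q t * u t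

namespace IsSchrodingerSolution_s7

variable {q q₁ q₂ u v u₁ v₁ u₂ v₂ : ℝ → ℝ} {a b : ℝ}

theorem continuous_fst (h : IsSchrodingerSolution_s7 q u v) : Continuous u :=
  continuous_iff_continuousAt.mpr fun x ↦ (h.hasDerivAt_fst x).continuousAt

theorem intervalIntegrable_mul_fst (h : IsSchrodingerSolution_s7 q u v)
    (hq : IntervalIntegrable q volume a b) :
    IntervalIntegrable (fun t ↦ q t * u t) volume a b :=
  hq.mul_continuousOn h.continuous_fst.continuousOn

theorem absolutelyContinuousOnInterval_snd (h : IsSchrodingerSolution_s7 q u v)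
    (hq : IntervalIntegrable q volume a b) : AbsolutelyContinuousOnInterval v a b := by
  rw [show v = fun x ↦ v a + ∫ t in a..x, q t * u t from
    funext fun x ↦ h.snd_eq_add_integral x a]
  have hconst : AbsolutelyContinuousOnInterval (fun _ ↦ v a) a b :=
    (contDiff_const (n := 1)).contDiffOn.absolutelyContinuousOnInterval
  exact hconst.fun_add ((h.intervalIntegrable_mul_fst hq)
    |>.absolutelyContinuousOnInterval_intervalIntegral left_mem_uIcc)

theorem absolutelyContinuousOnInterval_fst (h : IsSchrodingerSolution_s7 q u v)
    (hq : IntervalIntegrable q volume a b) : AbsolutelyContinuousOnInterval u a b := by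
  obtain ⟨C, hC⟩ := (h.absolutelyContinuousOnInterval_snd hq).exists_bound
  have hlip : LipschitzOnWith C.toNNReal u (uIcc a b) :=
    (convex_uIcc a b).lipschitzOnWith_of_nnnorm_hasDerivWithin_le
      (fun x _ ↦ (h.hasDerivAt_fst x).hasDerivWithinAt)
      (fun x hx ↦ NNReal.le_toNNReal_of_coe_le (hC x hx))
  exact hlip.absolutelyContinuousOnInterval

theorem ae_hasDerivAt_snd (h : IsSchrodingerSolution_s7 q u v)
    (hq : IntervalIntegrable q volume a b) :
    ∀ᵐ x, x ∈ uIcc a b → HasDerivAt v (q x * u x) x := by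
  filter_upwards [(h.intervalIntegrable_mul_fst hq).ae_hasDerivAt_integral] with x hx hxI
  rw [show v = fun x ↦ v a + ∫ t in a..x, q t * u t from
    funext fun x ↦ h.snd_eq_add_integral x a]
  exact (hx hxI a left_mem_uIcc).const_add _

theorem integral_sub_mul_eq_wronskian_sub (h₁ : IsSchrodingerSolution_s7 q₁ u₁ v₁)
    (h₂ : IsSchrodingerSolution_s7 q₂ u₂ v₂) (hq₁ : IntervalIntegrable q₁ volume a b)
    (hq₂ : IntervalIntegrable q₂ volume a b) :
    ∫ t in a..b, (q₂ t - q₁ t) * (u₁ t * u₂ t) =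
      (u₁ b * v₂ b - v₁ b * u₂ b) - (u₁ a * v₂ a - v₁ a * u₂ a) := by
  have hac : AbsolutelyContinuousOnInterval (fun t ↦ u₁ t * v₂ t - v₁ t * u₂ t) a b :=
    ((h₁.absolutelyContinuousOnInterval_fst hq₁).fun_mul
      (h₂.absolutelyContinuousOnInterval_snd hq₂)).fun_sub
    ((h₁.absolutelyContinuousOnInterval_snd hq₁).fun_mul
      (h₂.absolutelyContinuousOnInterval_fst hq₂))
  rw [← hac.integral_deriv_eq_sub]
  refine intervalIntegral.integral_congr_ae ?_
  filter_upwards [h₁.ae_hasDerivAt_snd hq₁, h₂.ae_hasDerivAt_snd hq₂] with t hv₁ hv₂ ht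
  have ht := uIoc_subset_uIcc ht
  rw [(((h₁.hasDerivAt_fst t).fun_mul (hv₂ ht)).fun_sub
    ((hv₁ ht).fun_mul (h₂.hasDerivAt_fst t))).deriv]
  ring

section CouplingDependence

variable {W V : ℝ → ℝ} {l m : ℝ}

/-- The Grönwall rate for the difference between the solution `u` at coupling `l` and the solutions
with the same initial data at couplings within distance `1` of `l`. -/
def couplingRate (W V u : ℝ → ℝ) (l t : ℝ) : ℝ :=
  |1 + (W t + l * V t)| + |V t| * (u t ^ 2 + 2)

theorem couplingRate_nonneg (W V u : ℝ → ℝ) (l t : ℝ) : 0 ≤ couplingRate W V u l t := by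
  unfold couplingRate
  positivity

theorem intervalIntegrable_couplingRate (hW : IntervalIntegrable W volume a b)
    (hV : IntervalIntegrable V volume a b) (hu : ContinuousOn u (uIcc a b)) (l : ℝ) :
    IntervalIntegrable (couplingRate W V u l) volume a b :=
  (intervalIntegrable_const.add (hW.add (hV.const_mul l))).abs.add
    (hV.abs.mul_continuousOn ((hu.pow 2).add continuousOn_const))

theorem sq_sub_add_sq_sub_le (h₁ : IsSchrodingerSolution_s7 (fun t ↦ W t + l * V t) u₁ v₁)
    (h₂ : IsSchrodingerSolution_s7 (fun t ↦ W t + m * V t) u₂ v₂)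
    (hW : IntervalIntegrable W volume a b) (hV : IntervalIntegrable V volume a b)
    (hu : u₂ a = u₁ a) (hv : v₂ a = v₁ a) (hml : |m - l| ≤ 1) :
    (u₂ b - u₁ b) ^ 2 + (v₂ b - v₁ b) ^ 2 ≤
      |m - l| * Real.exp |∫ t in a..b, couplingRate W V u₁ l t| := by
  have hq (j : ℝ) : IntervalIntegrable (fun t ↦ W t + j * V t) volume a b :=
    hW.add (hV.const_mul j)
  have hw := (h₂.absolutelyContinuousOnInterval_fst (hq m)).fun_sub
    (h₁.absolutelyContinuousOnInterval_fst (hq l))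
  have hz := (h₂.absolutelyContinuousOnInterval_snd (hq m)).fun_sub
    (h₁.absolutelyContinuousOnInterval_snd (hq l))
  -- Adding `|m - l|` absorbs the inhomogeneous term `(m - l) V u₁` of the difference equation.
  let F (t : ℝ) : ℝ := (u₂ t - u₁ t) ^ 2 + (v₂ t - v₁ t) ^ 2 + |m - l|
  have hF : AbsolutelyContinuousOnInterval F a b := by
    simp only [F, sq]
    exact ((hw.fun_mul hw).fun_add (hz.fun_mul hz)).fun_add
      (contDiff_const (n := 1)).contDiffOn.absolutelyContinuousOnInterval
  have hF_deriv : ∀ᵐ t, t ∈ uIcc a b → |deriv F t| ≤ couplingRate W V u₁ l t * F t := by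
    filter_upwards [h₁.ae_hasDerivAt_snd (hq l), h₂.ae_hasDerivAt_snd (hq m)] with t hv₁ hv₂ ht
    have hw' := ((h₂.hasDerivAt_fst t).fun_sub (h₁.hasDerivAt_fst t)).fun_pow 2
    have hz' := ((hv₂ ht).fun_sub (hv₁ ht)).fun_pow 2
    rw [((hw'.fun_add hz').add_const |m - l|).deriv]
    refine Eq.trans_le ?_ (abs_energy_rate_le hml)
    congr 1
    push_cast
    ring
  have hFb : F b ≤ F a * Real.exp |∫ t in a..b, couplingRate W V u₁ l t| :=
    le_mul_exp_of_abs_deriv_le hF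
      (intervalIntegrable_couplingRate hW hV h₁.continuous_fst.continuousOn l)
      (couplingRate_nonneg W V u₁ l) (fun _ _ ↦ by positivity) hF_deriv
  have hFa : F a = |m - l| := by simp [F, hu, hv]
  rw [hFa] at hFb
  exact (le_add_of_nonneg_right (abs_nonneg _)).trans hFb

end CouplingDependence

section CouplingFamily

variable {W V : ℝ → ℝ} {u v : ℝ → ℝ → ℝ} {c x l : ℝ}
  (h : ∀ m, IsSchrodingerSolution_s7 (fun t ↦ W t + m * V t) (u · m) (v · m))
  (hW : IntervalIntegrable W volume c x) (hV : IntervalIntegrable V volume c x)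
  (hu : ∀ m, u c m = u c l) (hv : ∀ m, v c m = v c l)

include h hW hV hu hv

theorem exists_abs_sub_le_mul_sqrt :
    ∃ C, 0 ≤ C ∧ ∀ m, |m - l| ≤ 1 → ∀ t ∈ uIcc c x,
      |u t m - u t l| ≤ C * √|m - l| ∧ |v t m - v t l| ≤ C * √|m - l| := by
  let M : ℝ := |∫ t in c..x, couplingRate W V (u · l) l t|
  refine ⟨√(Real.exp M), Real.sqrt_nonneg _, fun m hm t ht ↦ ?_⟩
  have hct : uIcc c t ⊆ uIcc c x := uIcc_subset_uIcc_left ht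
  have hrate : |∫ s in c..t, couplingRate W V (u · l) l s| ≤ M :=
    intervalIntegral.abs_integral_mono_interval (uIoc_subset_uIoc_of_uIcc_subset_uIcc hct)
      (.of_forall (couplingRate_nonneg W V (u · l) l))
      (intervalIntegrable_couplingRate hW hV (h l).continuous_fst.continuousOn l)
  have hsq : (u t m - u t l) ^ 2 + (v t m - v t l) ^ 2 ≤ Real.exp M * |m - l| := by
    refine ((h l).sq_sub_add_sq_sub_le (h m) (hW.mono_set hct) (hV.mono_set hct) (hu m) (hv m)
      hm).trans ?_
    rw [mul_comm]
    gcongr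
  rw [← Real.sqrt_mul (Real.exp_nonneg M)]
  exact ⟨Real.abs_le_sqrt ((le_add_of_nonneg_right (sq_nonneg _)).trans hsq),
    Real.abs_le_sqrt ((le_add_of_nonneg_left (sq_nonneg _)).trans hsq)⟩

theorem continuousAt_coupling : ContinuousAt (u x) l ∧ ContinuousAt (v x) l := by
  obtain ⟨C, -, hC⟩ := exists_abs_sub_le_mul_sqrt h hW hV hu hv
  exact ⟨continuousAt_of_abs_sub_le_mul_sqrt fun m hm ↦ (hC m hm x right_mem_uIcc).1,
    continuousAt_of_abs_sub_le_mul_sqrt fun m hm ↦ (hC m hm x right_mem_uIcc).2⟩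

theorem continuousAt_integral_mul_mul :
    ContinuousAt (fun m ↦ ∫ t in c..x, V t * (u t l * u t m)) l := by
  obtain ⟨C, hC0, hC⟩ := exists_abs_sub_le_mul_sqrt h hW hV hu hv
  have hcont (m : ℝ) : Continuous (u · m) := (h m).continuous_fst
  have hnear : ∀ᶠ m in 𝓝 l, |m - l| ≤ 1 := Metric.closedBall_mem_nhds l one_pos
  refine intervalIntegral.continuousAt_of_dominated_interval
    (bound := fun t ↦ |V t| * (|u t l| * (|u t l| + C))) (.of_forall fun m ↦ ?_) ?_ ?_ ?_
  · exact (hV.mul_continuousOn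
      ((hcont l).mul (hcont m)).continuousOn).aestronglyMeasurable_restrict_uIoc
  · filter_upwards [hnear] with m hm
    refine .of_forall fun t ht ↦ ?_
    have hdiff : |u t m - u t l| ≤ C :=
      (hC m hm t (uIoc_subset_uIcc ht)).1.trans
        (mul_le_of_le_one_right hC0 (Real.sqrt_le_one.mpr hm))
    have hum : |u t m| ≤ |u t l| + C := by linarith [abs_sub_abs_le_abs_sub (u t m) (u t l)]
    rw [Real.norm_eq_abs, abs_mul, abs_mul]
    gcongr
  · exact hV.abs.mul_continuousOn
      ((hcont l).abs.mul ((hcont l).abs.add continuous_const)).continuousOn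
  · refine .of_forall fun t ht ↦ continuousAt_const.mul (continuousAt_const.mul ?_)
    exact continuousAt_of_abs_sub_le_mul_sqrt fun m hm ↦ (hC m hm t (uIoc_subset_uIcc ht)).1

theorem wronskian_coupling (m : ℝ) :
    u x l * v x m - v x l * u x m = (m - l) * ∫ t in c..x, V t * (u t l * u t m) := by
  have hwronskian := (h l).integral_sub_mul_eq_wronskian_sub (h m) (hW.add (hV.const_mul l))
    (hW.add (hV.const_mul m))
  rw [hu m, hv m, mul_comm (v c l), sub_self, sub_zero] at hwronskian
  rw [← hwronskian, ← intervalIntegral.integral_const_mul]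
  congr 1 with t
  ring

end CouplingFamily

end IsSchrodingerSolution_s7

theorem hasDerivAt_sub_smul_of_continuousAt {𝕜 E : Type*} [NontriviallyNormedField 𝕜]
    [NormedAddCommGroup E] [NormedSpace 𝕜 E] {f : 𝕜 → E} {a : 𝕜} (hf : ContinuousAt f a) :
    HasDerivAt (fun x ↦ (x - a) • f x) (f a) a := by
  rw [hasDerivAt_iff_tendsto_slope]
  refine (hf.tendsto.mono_left nhdsWithin_le_nhds).congr' ?_
  filter_upwards [self_mem_nhdsWithin] with x hx
  rw [slope_sub_smul _ (Ne.symm hx)]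

theorem hasDerivAt_of_hasDerivAt_sin_sub {f : ℝ → ℝ} {f' a : ℝ} (hf : ContinuousAt f a)
    (hsin : HasDerivAt (fun x ↦ Real.sin (f x - f a)) f' a) : HasDerivAt f f' a := by
  have harcsin : HasDerivAt Real.arcsin 1 (Real.sin (f a - f a)) := by
    simpa using Real.hasDerivAt_arcsin (x := 0) (by norm_num) (by norm_num)
  have hlim : Tendsto (fun x ↦ f x - f a) (𝓝 a) (𝓝 0) := by
    simpa using hf.tendsto.sub_const (f a)
  have hcomp := (harcsin.comp a hsin).add_const (f a)
  rw [one_mul] at hcomp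
  refine hcomp.congr_of_eventuallyEq ?_
  filter_upwards [hlim (Icc_mem_nhds (neg_lt_zero.mpr Real.pi_div_two_pos) Real.pi_div_two_pos)]
    with x hx
  rw [Function.comp_apply, Real.arcsin_sin hx.1 hx.2, sub_add_cancel]

theorem sin_sub_eq_neg_wronskian_div {u₁ v₁ r₁ φ₁ u₂ v₂ r₂ φ₂ : ℝ} (hr₁ : r₁ ≠ 0) (hr₂ : r₂ ≠ 0)
    (hu₁ : u₁ = r₁ * Real.sin φ₁) (hv₁ : v₁ = r₁ * Real.cos φ₁)
    (hu₂ : u₂ = r₂ * Real.sin φ₂) (hv₂ : v₂ = r₂ * Real.cos φ₂) :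
    Real.sin (φ₂ - φ₁) = -(u₁ * v₂ - v₁ * u₂) / (r₁ * r₂) := by
  rw [Real.sin_sub, hu₁, hv₁, hu₂, hv₂]
  field_simp
  ring

theorem eq_sqrt_sq_add_sq_of_polar {u v r φ : ℝ} (hr : 0 ≤ r) (hu : u = r * Real.sin φ)
    (hv : v = r * Real.cos φ) : r = √(u ^ 2 + v ^ 2) := by
  rw [hu, hv, mul_pow, mul_pow, ← mul_add, Real.sin_sq_add_cos_sq, mul_one, Real.sqrt_sq hr]

theorem prufer_phase_deriv_coupling_general {W V : ℝ → ℝ} {c x l : ℝ}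
    (hW : LocallyIntegrable W volume) (hV : LocallyIntegrable V volume) {u v : ℝ → ℝ → ℝ}
    (h : ∀ m, IsSchrodingerSolution_s7 (fun t ↦ W t + m * V t) (u · m) (v · m))
    (hu : ∀ m, u c m = u c l) (hv : ∀ m, v c m = v c l) {R φ : ℝ → ℝ} (hR : ∀ m, 0 < R m)
    (huR : ∀ m, u x m = R m * Real.sin (φ m)) (hvR : ∀ m, v x m = R m * Real.cos (φ m))
    (hφ : ContinuousAt φ l) :
    HasDerivAt φ (-(R l ^ 2)⁻¹ * ∫ t in c..x, V t * u t l ^ 2) l := by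
  have intervalIntegrable {f : ℝ → ℝ} (hf : LocallyIntegrable f volume) :
      IntervalIntegrable f volume c x :=
    (hf.integrableOn_isCompact isCompact_uIcc).intervalIntegrable
  replace hW := intervalIntegrable hW
  replace hV := intervalIntegrable hV
  have hRcont : ContinuousAt R l := by
    obtain ⟨hux, hvx⟩ := IsSchrodingerSolution_s7.continuousAt_coupling h hW hV hu hv
    rw [funext fun m ↦ eq_sqrt_sq_add_sq_of_polar (hR m).le (huR m) (hvR m)]
    exact ((hux.pow 2).add (hvx.pow 2)).sqrt
  let K (m : ℝ) : ℝ := -(R l * R m)⁻¹ * ∫ t in c..x, V t * (u t l * u t m)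
  have hK : ContinuousAt K l :=
    ((continuousAt_const.mul hRcont).inv₀ (mul_pos (hR l) (hR l)).ne').neg.mul
      (IsSchrodingerSolution_s7.continuousAt_integral_mul_mul h hW hV hu hv)
  have hsin (m : ℝ) : Real.sin (φ m - φ l) = (m - l) • K m := by
    rw [sin_sub_eq_neg_wronskian_div (hR l).ne' (hR m).ne' (huR l) (hvR l) (huR m) (hvR m),
      IsSchrodingerSolution_s7.wronskian_coupling h hW hV hu hv, smul_eq_mul]
    simp only [K]
    ring
  have hderiv : HasDerivAt φ (K l) l :=
    hasDerivAt_of_hasDerivAt_sin_sub hφ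
      ((funext hsin) ▸ hasDerivAt_sub_smul_of_continuousAt hK)
  simpa only [K, ← sq] using hderiv

end PruferPhase

/-- Derivative of the Prüfer phase with respect to the coupling constant `λ`:
`∂φ/∂λ(x,λ) = -R(x,λ)⁻² ∫_c^x V u(·,λ)²`. -/
theorem prufer_phase_deriv_coupling (W V : ℝ → ℝ) (c θ : ℝ)
    (hW : LocallyIntegrable W volume) (hV : LocallyIntegrable V volume)
    (u v R φ : ℝ → ℝ → ℝ)
    (hu : ∀ (lam : ℝ) (x : ℝ), HasDerivAt (fun s => u s lam) (v x lam) x)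
    (hv : ∀ (lam : ℝ) (x y : ℝ),
      v x lam = v y lam + ∫ t in y..x, (W t + lam * V t) * u t lam)
    (hu0 : ∀ lam : ℝ, u c lam = Real.sin θ)
    (hv0 : ∀ lam : ℝ, v c lam = Real.cos θ)
    (hR : ∀ x lam : ℝ, 0 < R x lam)
    (huR : ∀ x lam : ℝ, u x lam = R x lam * Real.sin (φ x lam))
    (hvR : ∀ x lam : ℝ, v x lam = R x lam * Real.cos (φ x lam))
    (hφ0 : ∀ lam : ℝ, φ c lam = θ)
    (hφcont : Continuous fun p : ℝ × ℝ => φ p.1 p.2) :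
    ∀ x lam : ℝ,
      HasDerivAt (fun l => φ x l)
        (-(R x lam ^ 2)⁻¹ * ∫ t in c..x, V t * u t lam ^ 2) lam := by
  exact fun x lam ↦ prufer_phase_deriv_coupling_general hW hV (fun m ↦ ⟨hu m, hv m⟩)
    (fun m ↦ (hu0 m).trans (hu0 lam).symm) (fun m ↦ (hv0 m).trans (hv0 lam).symm) (hR x) (huR x)
    (hvR x) (hφcont.comp (Continuous.prodMk_right x)).continuousAt
end

section
/- (Sturm comparison) Let q₁, q₂ : ℝ → ℝ be locally integrable, let c ≤ x be real numbers, and suppose q₁(t) ≥ q₂(t) for almost every t ∈ [c, x]. For i = 1, 2 let (uᵢ, vᵢ) be a solution of −u″ + qᵢ·u = 0 with uᵢ(c) = sin θᵢ and vᵢ(c) = cos θᵢ, and let (Rᵢ, φᵢ) be Prüfer variables for (uᵢ, vᵢ) with φᵢ(c) = θᵢ. If θ₂ ≥ θ₁, then φ₂(x) ≥ φ₁(x). -/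
open MeasureTheory

/-!
The Wronskian `W = u₁ v₂ - v₁ u₂` equals `R₁ R₂ sin (φ₁ - φ₂)` and satisfies
`W' = (q₂ - q₁) u₁ u₂` almost everywhere. Suppose that the phases agree at some point. If the
common phase is not a multiple of `π`, then `u₁ u₂ > 0` there; if it is, then `u₁` and `u₂` both
vanish with derivatives of the same sign. Either way `u₁ u₂ > 0` immediately to the right of the
point, so `W` starts at `0` and does not increase there, and `φ₁ ≤ φ₂` persists. Hence the set where
`φ₁ ≤ φ₂`, which is closed, extends to the right of each of its points, and continuous induction
carries it from `c` to `x`.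
-/

open Set Topology

section Calculus

variable {a b : ℝ}

theorem integral_mul_add_mul_eq_sub_of_eq_add_integral {f F g G : ℝ → ℝ}
    (hf : IntervalIntegrable f volume a b) (hg : IntervalIntegrable g volume a b)
    (hF : ∀ y ∈ uIcc a b, F y = F a + ∫ t in a..y, f t)
    (hG : ∀ y ∈ uIcc a b, G y = G a + ∫ t in a..y, g t) :
    ∫ t in a..b, (f t * G t + F t * g t) = F b * G b - F a * G a := by
  have hac {h : ℝ → ℝ} (hh : IntervalIntegrable h volume a b) (C : ℝ) :
      AbsolutelyContinuousOnInterval (fun y ↦ C + ∫ t in a..y, h t) a b :=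
    (LipschitzWith.const C).lipschitzOnWith.absolutelyContinuousOnInterval.add
      (hh.absolutelyContinuousOnInterval_intervalIntegral left_mem_uIcc)
  have hparts := (hac hf (F a)).integral_deriv_mul_eq_sub (hac hg (G a))
  rw [← hF b right_mem_uIcc, ← hG b right_mem_uIcc, ← hF a left_mem_uIcc,
    ← hG a left_mem_uIcc] at hparts
  rw [← hparts]
  refine intervalIntegral.integral_congr_ae ?_
  filter_upwards [hf.ae_hasDerivAt_integral, hg.ae_hasDerivAt_integral] with t hft hgt ht
  have ht' : t ∈ uIcc a b := uIoc_subset_uIcc ht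
  rw [((hft ht' a left_mem_uIcc).const_add (F a)).deriv,
    ((hgt ht' a left_mem_uIcc).const_add (G a)).deriv, ← hF t ht', ← hG t ht']

theorem eventually_nhdsGT_mul_pos_of_hasDerivWithinAt {f g : ℝ → ℝ} {f' g' : ℝ}
    (hf : HasDerivWithinAt f f' (Ioi a) a) (hg : HasDerivWithinAt g g' (Ioi a) a)
    (hfa : f a = 0) (hga : g a = 0) (hfg : 0 < f' * g') :
    ∀ᶠ t in 𝓝[>] a, 0 < f t * g t := by
  rw [hasDerivWithinAt_iff_tendsto_slope' self_notMem_Ioi] at hf hg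
  filter_upwards [(hf.mul hg).eventually_const_lt hfg, self_mem_nhdsWithin] with t hslope hat
  have hta : 0 < t - a := sub_pos.mpr hat
  simp only [slope_def_field, hfa, hga, sub_zero, div_mul_div_comm] at hslope
  exact (div_pos_iff_of_pos_right (mul_pos hta hta)).mp hslope

end Calculus

/-- `(u, v)` solves `-u'' + q u = 0` on the interval `s`, as the first-order system `u' = v`,
`v' = q u` with the second equation in integrated form. The derivative of `u` is one-sided at
endpoints of `s`. Local integrability of `q` is part of the notion, since otherwise the integral
could take its junk value `0`. -/
structure IsSchrodingerSolutionOn (q u v : ℝ → ℝ) (s : Set ℝ) : Prop where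
  locallyIntegrableOn : LocallyIntegrableOn q s
  hasDerivWithinAt : ∀ y ∈ s, HasDerivWithinAt u (v y) s y
  eq_add_integral : ∀ y ∈ s, ∀ z ∈ s, v y = v z + ∫ t in z..y, q t * u t

/-- `(R, φ)` are Prüfer variables for `(u, v)` on `s`: polar coordinates with continuous angle,
measured from the `v`-axis towards the `u`-axis. -/
structure IsPruferOn (u v R φ : ℝ → ℝ) (s : Set ℝ) : Prop where
  radius_pos : ∀ y ∈ s, 0 < R y
  continuousOn_phase : ContinuousOn φ s
  fst_eq : ∀ y ∈ s, u y = R y * Real.sin (φ y)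
  snd_eq : ∀ y ∈ s, v y = R y * Real.cos (φ y)

/-- The Wronskian of two solutions `uᵢ` with derivatives `vᵢ`, signed so that it has the sign of
`sin (φ₁ - φ₂)` for the Prüfer phases `φᵢ`. -/
def wronskian (u₁ v₁ u₂ v₂ : ℝ → ℝ) (t : ℝ) : ℝ :=
  u₁ t * v₂ t - v₁ t * u₂ t

namespace IsSchrodingerSolutionOn

variable {q u v : ℝ → ℝ} {s : Set ℝ} {a b : ℝ}

theorem mono (h : IsSchrodingerSolutionOn q u v s) {t : Set ℝ} (hts : t ⊆ s) :
    IsSchrodingerSolutionOn q u v t where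
  locallyIntegrableOn := h.locallyIntegrableOn.mono_set hts
  hasDerivWithinAt y hy := (h.hasDerivWithinAt y (hts hy)).mono hts
  eq_add_integral y hy z hz := h.eq_add_integral y (hts hy) z (hts hz)

theorem continuousOn_fst (h : IsSchrodingerSolutionOn q u v s) : ContinuousOn u s :=
  fun y hy ↦ (h.hasDerivWithinAt y hy).continuousWithinAt

theorem hasDerivWithinAt_Ioi (h : IsSchrodingerSolutionOn q u v (Icc a b)) (hab : a < b) :
    HasDerivWithinAt u (v a) (Ioi a) a :=
  (h.hasDerivWithinAt a (left_mem_Icc.mpr hab.le)).mono_of_mem_nhdsWithin (Icc_mem_nhdsGT hab)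

theorem intervalIntegrable_mul (h : IsSchrodingerSolutionOn q u v (uIcc a b)) :
    IntervalIntegrable (fun t ↦ q t * u t) volume a b :=
  (h.locallyIntegrableOn.integrableOn_isCompact isCompact_uIcc).intervalIntegrable.mul_continuousOn
    h.continuousOn_fst

theorem continuousOn_snd (h : IsSchrodingerSolutionOn q u v (uIcc a b)) :
    ContinuousOn v (uIcc a b) :=
  (continuousOn_const.add (intervalIntegral.continuousOn_primitive_interval'
    h.intervalIntegrable_mul left_mem_uIcc)).congr
      fun y hy ↦ h.eq_add_integral y hy a left_mem_uIcc

theorem fst_eq_add_integral (h : IsSchrodingerSolutionOn q u v (uIcc a b)) :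
    u b = u a + ∫ t in a..b, v t := by
  have hderiv : ∀ t ∈ Ioo (min a b) (max a b), HasDerivWithinAt u (v t) (Ioi t) t := fun t ht ↦
    ((h.hasDerivWithinAt t (Ioo_subset_Icc_self ht)).hasDerivAt
      (Icc_mem_nhds ht.1 ht.2)).hasDerivWithinAt
  rw [intervalIntegral.integral_eq_sub_of_hasDeriv_right h.continuousOn_fst hderiv
    h.continuousOn_snd.intervalIntegrable, add_sub_cancel]

end IsSchrodingerSolutionOn

theorem IsPruferOn.mono {u v R φ : ℝ → ℝ} {s t : Set ℝ} (h : IsPruferOn u v R φ s)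
    (hts : t ⊆ s) : IsPruferOn u v R φ t where
  radius_pos y hy := h.radius_pos y (hts hy)
  continuousOn_phase := h.continuousOn_phase.mono hts
  fst_eq y hy := h.fst_eq y (hts hy)
  snd_eq y hy := h.snd_eq y (hts hy)

section Comparison

variable {q₁ u₁ v₁ R₁ φ₁ q₂ u₂ v₂ R₂ φ₂ : ℝ → ℝ} {s : Set ℝ} {a b t : ℝ}

theorem wronskian_sub_wronskian_eq_integral
    (h₁ : IsSchrodingerSolutionOn q₁ u₁ v₁ (uIcc a b))
    (h₂ : IsSchrodingerSolutionOn q₂ u₂ v₂ (uIcc a b)) :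
    wronskian u₁ v₁ u₂ v₂ b - wronskian u₁ v₁ u₂ v₂ a =
      ∫ t in a..b, (q₂ t - q₁ t) * (u₁ t * u₂ t) := by
  have hparts {q u v q' u' v' : ℝ → ℝ} (h : IsSchrodingerSolutionOn q u v (uIcc a b))
      (h' : IsSchrodingerSolutionOn q' u' v' (uIcc a b)) :
      ∫ t in a..b, (v t * v' t + u t * (q' t * u' t)) = u b * v' b - u a * v' a :=
    integral_mul_add_mul_eq_sub_of_eq_add_integral h.continuousOn_snd.intervalIntegrable
      h'.intervalIntegrable_mul
      (fun y hy ↦ (h.mono (uIcc_subset_uIcc_left hy)).fst_eq_add_integral)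
      (fun y hy ↦ h'.eq_add_integral y hy a left_mem_uIcc)
  have hintegrable {q u v q' u' v' : ℝ → ℝ} (h : IsSchrodingerSolutionOn q u v (uIcc a b))
      (h' : IsSchrodingerSolutionOn q' u' v' (uIcc a b)) :
      IntervalIntegrable (fun t ↦ v t * v' t + u t * (q' t * u' t)) volume a b :=
    (h.continuousOn_snd.mul h'.continuousOn_snd).intervalIntegrable.add
      (h'.intervalIntegrable_mul.continuousOn_mul h.continuousOn_fst)
  calc wronskian u₁ v₁ u₂ v₂ b - wronskian u₁ v₁ u₂ v₂ a
      = (u₁ b * v₂ b - u₁ a * v₂ a) - (u₂ b * v₁ b - u₂ a * v₁ a) := by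
        simp only [wronskian]; ring
    _ = ∫ t in a..b, ((v₁ t * v₂ t + u₁ t * (q₂ t * u₂ t)) -
          (v₂ t * v₁ t + u₂ t * (q₁ t * u₁ t))) := by
        rw [intervalIntegral.integral_sub (hintegrable h₁ h₂) (hintegrable h₂ h₁),
          hparts h₁ h₂, hparts h₂ h₁]
    _ = ∫ t in a..b, (q₂ t - q₁ t) * (u₁ t * u₂ t) := by
        congr 1 with t; ring

theorem wronskian_le_of_mul_nonneg (hab : a ≤ b)
    (h₁ : IsSchrodingerSolutionOn q₁ u₁ v₁ (Icc a b))
    (h₂ : IsSchrodingerSolutionOn q₂ u₂ v₂ (Icc a b))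
    (hq : ∀ᵐ t, t ∈ Icc a b → q₂ t ≤ q₁ t) (hu : ∀ t ∈ Ioc a b, 0 ≤ u₁ t * u₂ t) :
    wronskian u₁ v₁ u₂ v₂ b ≤ wronskian u₁ v₁ u₂ v₂ a := by
  rw [← uIcc_of_le hab] at h₁ h₂
  rw [← sub_nonpos, wronskian_sub_wronskian_eq_integral h₁ h₂, intervalIntegral.integral_of_le hab]
  refine integral_nonpos_of_ae ((ae_restrict_iff' measurableSet_Ioc).mpr ?_)
  filter_upwards [hq] with t hqt ht
  exact mul_nonpos_of_nonpos_of_nonneg (sub_nonpos.mpr (hqt (Ioc_subset_Icc_self ht))) (hu t ht)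

theorem wronskian_eq_mul_sin_sub (hp₁ : IsPruferOn u₁ v₁ R₁ φ₁ s)
    (hp₂ : IsPruferOn u₂ v₂ R₂ φ₂ s) (ht : t ∈ s) :
    wronskian u₁ v₁ u₂ v₂ t = R₁ t * R₂ t * Real.sin (φ₁ t - φ₂ t) := by
  rw [wronskian, hp₁.fst_eq t ht, hp₁.snd_eq t ht, hp₂.fst_eq t ht, hp₂.snd_eq t ht, Real.sin_sub]
  ring

theorem phase_le_of_wronskian_nonpos (hp₁ : IsPruferOn u₁ v₁ R₁ φ₁ s)
    (hp₂ : IsPruferOn u₂ v₂ R₂ φ₂ s) (ht : t ∈ s) (hπ : φ₁ t - φ₂ t < Real.pi)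
    (hW : wronskian u₁ v₁ u₂ v₂ t ≤ 0) : φ₁ t ≤ φ₂ t := by
  by_contra! hlt
  rw [wronskian_eq_mul_sin_sub hp₁ hp₂ ht] at hW
  have hsin : 0 < Real.sin (φ₁ t - φ₂ t) := Real.sin_pos_of_pos_of_lt_pi (sub_pos.mpr hlt) hπ
  exact hW.not_gt (mul_pos (mul_pos (hp₁.radius_pos t ht) (hp₂.radius_pos t ht)) hsin)

theorem eventually_nhdsGT_mul_pos_of_phase_eq (hab : a < b)
    (h₁ : IsSchrodingerSolutionOn q₁ u₁ v₁ (Icc a b))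
    (h₂ : IsSchrodingerSolutionOn q₂ u₂ v₂ (Icc a b))
    (hp₁ : IsPruferOn u₁ v₁ R₁ φ₁ (Icc a b)) (hp₂ : IsPruferOn u₂ v₂ R₂ φ₂ (Icc a b))
    (hφ : φ₁ a = φ₂ a) : ∀ᶠ t in 𝓝[>] a, 0 < u₁ t * u₂ t := by
  have ha : a ∈ Icc a b := left_mem_Icc.mpr hab.le
  have hR : 0 < R₁ a * R₂ a := mul_pos (hp₁.radius_pos a ha) (hp₂.radius_pos a ha)
  have hu₁ := h₁.hasDerivWithinAt_Ioi hab
  have hu₂ := h₂.hasDerivWithinAt_Ioi hab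
  by_cases hsin : Real.sin (φ₂ a) = 0
  · have hcos : Real.cos (φ₂ a) ≠ 0 := fun hcos ↦ by
      simpa [hsin, hcos] using Real.sin_sq_add_cos_sq (φ₂ a)
    refine eventually_nhdsGT_mul_pos_of_hasDerivWithinAt hu₁ hu₂ ?_ ?_ ?_
    · rw [hp₁.fst_eq a ha, hφ, hsin, mul_zero]
    · rw [hp₂.fst_eq a ha, hsin, mul_zero]
    · rw [hp₁.snd_eq a ha, hp₂.snd_eq a ha, hφ, mul_mul_mul_comm]
      exact mul_pos hR (mul_self_pos.mpr hcos)
  · refine (hu₁.continuousWithinAt.mul hu₂.continuousWithinAt).eventually_const_lt ?_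
    rw [Pi.mul_apply, hp₁.fst_eq a ha, hp₂.fst_eq a ha, hφ, mul_mul_mul_comm]
    exact mul_pos hR (mul_self_pos.mpr hsin)

theorem eventually_nhdsGT_phase_le_of_phase_eq (hab : a < b)
    (h₁ : IsSchrodingerSolutionOn q₁ u₁ v₁ (Icc a b))
    (h₂ : IsSchrodingerSolutionOn q₂ u₂ v₂ (Icc a b))
    (hp₁ : IsPruferOn u₁ v₁ R₁ φ₁ (Icc a b)) (hp₂ : IsPruferOn u₂ v₂ R₂ φ₂ (Icc a b))
    (hq : ∀ᵐ t, t ∈ Icc a b → q₂ t ≤ q₁ t) (hφ : φ₁ a = φ₂ a) :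
    ∀ᶠ t in 𝓝[>] a, φ₁ t ≤ φ₂ t := by
  have ha : a ∈ Icc a b := left_mem_Icc.mpr hab.le
  have hW : wronskian u₁ v₁ u₂ v₂ a = 0 := by
    rw [wronskian_eq_mul_sin_sub hp₁ hp₂ ha, hφ, sub_self, Real.sin_zero, mul_zero]
  have hπ : ∀ᶠ t in 𝓝[>] a, φ₁ t - φ₂ t < Real.pi := by
    have hcont : ContinuousWithinAt (fun t ↦ φ₁ t - φ₂ t) (Ioi a) a :=
      ((hp₁.continuousOn_phase.sub hp₂.continuousOn_phase) a ha).mono_of_mem_nhdsWithin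
        (Icc_mem_nhdsGT hab)
    exact hcont.eventually_lt_const (by simpa [hφ] using Real.pi_pos)
  obtain ⟨d, hd, hu⟩ := mem_nhdsGT_iff_exists_Ioo_subset.mp
    (eventually_nhdsGT_mul_pos_of_phase_eq hab h₁ h₂ hp₁ hp₂ hφ)
  filter_upwards [hπ, Ioo_mem_nhdsGT hd, Ioc_mem_nhdsGT hab] with t hπt htd htb
  have hsub : Icc a t ⊆ Icc a b := Icc_subset_Icc_right htb.2
  refine phase_le_of_wronskian_nonpos hp₁ hp₂ (Ioc_subset_Icc_self htb) hπt (hW ▸ ?_)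
  exact wronskian_le_of_mul_nonneg htb.1.le (h₁.mono hsub) (h₂.mono hsub)
    (hq.mono fun _ h hmem ↦ h (hsub hmem)) fun r hr ↦
      (hu ⟨hr.1, hr.2.trans_lt htd.2⟩ : 0 < u₁ r * u₂ r).le

theorem sturm_comparison_general {c x : ℝ} (hcx : c ≤ x)
    (h₁ : IsSchrodingerSolutionOn q₁ u₁ v₁ (Icc c x))
    (h₂ : IsSchrodingerSolutionOn q₂ u₂ v₂ (Icc c x))
    (hp₁ : IsPruferOn u₁ v₁ R₁ φ₁ (Icc c x)) (hp₂ : IsPruferOn u₂ v₂ R₂ φ₂ (Icc c x))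
    (hq : ∀ᵐ t, t ∈ Icc c x → q₂ t ≤ q₁ t) (hφ : φ₁ c ≤ φ₂ c) : φ₁ x ≤ φ₂ x := by
  have hclosed : IsClosed ({t | φ₁ t ≤ φ₂ t} ∩ Icc c x) := by
    rw [inter_comm]
    exact isClosed_Icc.isClosed_le hp₁.continuousOn_phase hp₂.continuousOn_phase
  refine hclosed.Icc_subset_of_forall_mem_nhdsWithin hφ ?_ (right_mem_Icc.mpr hcx)
  rintro t ⟨hle, ht⟩
  have hsub : Icc t x ⊆ Icc c x := Icc_subset_Icc_left ht.1
  rcases (mem_ofPred.mp hle).lt_or_eq with hlt | heq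
  · have hcont {φ : ℝ → ℝ} (hφ : ContinuousOn φ (Icc c x)) : ContinuousWithinAt φ (Ioi t) t :=
      (hφ t (Ico_subset_Icc_self ht)).mono_of_mem_nhdsWithin (Icc_mem_nhdsGT_of_mem ht)
    exact ((hcont hp₁.continuousOn_phase).eventually_lt (hcont hp₂.continuousOn_phase) hlt).mono
      fun _ ↦ le_of_lt
  · exact eventually_nhdsGT_phase_le_of_phase_eq ht.2 (h₁.mono hsub) (h₂.mono hsub)
      (hp₁.mono hsub) (hp₂.mono hsub) (hq.mono fun _ h hmem ↦ h (hsub hmem)) heq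

end Comparison

/-- Sturm comparison theorem in terms of Prüfer phases: if `q₁ ≥ q₂` a.e. on `[c,x]`
and `θ₂ ≥ θ₁`, then `φ₂(x) ≥ φ₁(x)`. -/
theorem sturm_comparison (q₁ q₂ : ℝ → ℝ) (c x θ₁ θ₂ : ℝ) (hcx : c ≤ x)
    (hq₁ : LocallyIntegrable q₁ volume) (hq₂ : LocallyIntegrable q₂ volume)
    (hcmp : ∀ᵐ t ∂volume, t ∈ Set.Icc c x → q₂ t ≤ q₁ t)
    (u₁ v₁ R₁ φ₁ u₂ v₂ R₂ φ₂ : ℝ → ℝ)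
    (hu₁ : ∀ y : ℝ, HasDerivAt u₁ (v₁ y) y)
    (hv₁ : ∀ y z : ℝ, v₁ y = v₁ z + ∫ t in z..y, q₁ t * u₁ t)
    (hu₂ : ∀ y : ℝ, HasDerivAt u₂ (v₂ y) y)
    (hv₂ : ∀ y z : ℝ, v₂ y = v₂ z + ∫ t in z..y, q₂ t * u₂ t)
    (hu₁0 : u₁ c = Real.sin θ₁) (hv₁0 : v₁ c = Real.cos θ₁)
    (hu₂0 : u₂ c = Real.sin θ₂) (hv₂0 : v₂ c = Real.cos θ₂)
    (hR₁ : ∀ y : ℝ, 0 < R₁ y) (hR₂ : ∀ y : ℝ, 0 < R₂ y)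
    (hφ₁c : Continuous φ₁) (hφ₂c : Continuous φ₂)
    (huR₁ : ∀ y : ℝ, u₁ y = R₁ y * Real.sin (φ₁ y))
    (hvR₁ : ∀ y : ℝ, v₁ y = R₁ y * Real.cos (φ₁ y))
    (huR₂ : ∀ y : ℝ, u₂ y = R₂ y * Real.sin (φ₂ y))
    (hvR₂ : ∀ y : ℝ, v₂ y = R₂ y * Real.cos (φ₂ y))
    (hφ₁0 : φ₁ c = θ₁) (hφ₂0 : φ₂ c = θ₂)
    (hθ : θ₁ ≤ θ₂) :
    φ₁ x ≤ φ₂ x := by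
  exact sturm_comparison_general hcx
    ⟨hq₁.locallyIntegrableOn _, fun y _ ↦ (hu₁ y).hasDerivWithinAt, fun y _ z _ ↦ hv₁ y z⟩
    ⟨hq₂.locallyIntegrableOn _, fun y _ ↦ (hu₂ y).hasDerivWithinAt, fun y _ z _ ↦ hv₂ y z⟩
    ⟨fun y _ ↦ hR₁ y, hφ₁c.continuousOn, fun y _ ↦ huR₁ y, fun y _ ↦ hvR₁ y⟩
    ⟨fun y _ ↦ hR₂ y, hφ₂c.continuousOn, fun y _ ↦ huR₂ y, fun y _ ↦ hvR₂ y⟩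
    hcmp (hφ₁0.trans_le (hθ.trans_eq hφ₂0.symm))
end
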